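/- arXiv:1701.02168 — 3 statements merged into one kernel-verified Lean document; each statement's English description precedes it below -/
import Mathlib

section
/- Let A be a parity automaton with costs over Σ_I × Σ_O with n states and k colors, where Ω(Q) contains both an even and an odd color. If Player O wins Γ_f(L(A)) for some delay function f, then she also wins Γ_f(L(A)) for the constant delay function f given by f(0) = 2^{2n⁴k²+2}, with a winning strategy τ_O satisfying Cst_A(τ_O) ≤ n³k²·2^{2n⁷k⁴+3}. -/
attribute [local instance] Classical.propDecidable

noncomputable section

/-- A parity automaton with costs `(Q, A, qI, δ, Ω, Cst)`.
`Cst q a = true` means that the transition `(q, a, δ q a)` is an increment-transition,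
`Cst q a = false` means it is an `ε`-transition. -/
structure PACost (Q : Type) (A : Type) where
  qI : Q
  δ : Q → A → Q
  Ω : Q → ℕ
  Cst : Q → A → Bool

namespace PACost

variable {Q A : Type}

/-- The state reached after processing the first `n` letters of `w` starting in `q0`. -/
def stateAt (M : PACost Q A) (q0 : Q) (w : ℕ → A) : ℕ → Q
  | 0 => q0
  | n + 1 => M.δ (stateAt M q0 w n) (w n)

/-- The cost (number of increment-transitions) of the run infix between positions `m` and `n`. -/
def segCost (M : PACost Q A) (q0 : Q) (w : ℕ → A) (m n : ℕ) : ℕ :=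
  ((Finset.Ico m n).filter fun j => M.Cst (stateAt M q0 w j) (w j) = true).card

/-- `Ans c`: the set of even colors of `M` that are larger than `c`. -/
def Ans (M : PACost Q A) (c : ℕ) : Set ℕ :=
  { c' | (∃ q, M.Ω q = c') ∧ c < c' ∧ Even c' }

/-- The cost-of-response at position `n` of the run of `M` on `w` starting in `q0`. -/
def Cor (M : PACost Q A) (q0 : Q) (w : ℕ → A) (n : ℕ) : ℕ∞ :=
  if Even (M.Ω (stateAt M q0 w n)) then 0
  else
    sInf { c : ℕ∞ | ∃ n', n < n' ∧
      M.Ω (stateAt M q0 w n') ∈ M.Ans (M.Ω (stateAt M q0 w n)) ∧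
      c = (segCost M q0 w n n' : ℕ∞) }

/-- The run of `M` on `w` starting in `q0` satisfies the parity condition with costs. -/
def Accepting (M : PACost Q A) (q0 : Q) (w : ℕ → A) : Prop :=
  Filter.limsup (fun n => Cor M q0 w n) Filter.atTop < ⊤

/-- The language of `M`. -/
def Lang (M : PACost Q A) : Set (ℕ → A) := { w | Accepting M M.qI w }

/-- `M` is a finitary Büchi automaton: every transition is an increment-transition and
all colors are `1` or `2`. -/
def FinBuchi (M : PACost Q A) : Prop :=
  (∀ q a, M.Cst q a = true) ∧ ∀ q, M.Ω q = 1 ∨ M.Ω q = 2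

end PACost

/-- The finite segment `w m, w (m+1), …, w (n-1)` of an infinite word `w`. -/
def seg {A : Type} (w : ℕ → A) (m n : ℕ) : List A :=
  (List.range (n - m)).map fun i => w (m + i)

section DelayGames

variable {I O : Type}

/-- The `n`-th letter of the concatenation `u 0 ++ u 1 ++ u 2 ++ ⋯`
(well-defined whenever all blocks are non-empty). -/
def flatWord [Inhabited I] (u : ℕ → List I) (n : ℕ) : I :=
  (((List.range (n + 1)).map u).flatten).getD n default

/-- A delay function maps every round to a positive number of letters. -/
def DelayFn (f : ℕ → ℕ) : Prop := ∀ i, 0 < f i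

/-- The constant delay function `f_k` with `f_k 0 = k + 1` and `f_k i = 1` for `i > 0`. -/
def constDF (k : ℕ) : ℕ → ℕ := fun i => if i = 0 then k + 1 else 1

/-- The sequence of letters Player I has produced up to (and including) round `i`. -/
def oHist (u : ℕ → List I) (i : ℕ) : List I := ((List.range (i + 1)).map u).flatten

/-- `τO` is a winning strategy for Player O in the delay game with delay function `f`
and winning condition `L`. -/
def OWinning [Inhabited I] (f : ℕ → ℕ) (L : Set (ℕ → I × O)) (τO : List I → O) : Prop :=
  ∀ u : ℕ → List I, ∀ v : ℕ → O,
    (∀ i, (u i).length = f i) →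
    (∀ i, v i = τO (oHist u i)) →
    (fun n => (flatWord u n, v n)) ∈ L

/-- Player O wins the delay game `Γ_f(L)`. -/
def OWins [Inhabited I] (f : ℕ → ℕ) (L : Set (ℕ → I × O)) : Prop :=
  ∃ τO : List I → O, OWinning f L τO

/-- `τI` is a winning strategy for Player I in the delay game with delay function `f`
and winning condition `L`. -/
def IWinning [Inhabited I] (f : ℕ → ℕ) (L : Set (ℕ → I × O)) (τI : List O → List I) : Prop :=
  (∀ w, (τI w).length = f w.length) ∧
  ∀ u : ℕ → List I, ∀ v : ℕ → O,
    (∀ i, u i = τI ((List.range i).map v)) →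
    (fun n => (flatWord u n, v n)) ∉ L

/-- Player I wins the delay game `Γ_f(L)`. -/
def IWins [Inhabited I] (f : ℕ → ℕ) (L : Set (ℕ → I × O)) : Prop :=
  ∃ τI : List O → List I, IWinning f L τI

/-- The cost of a strategy `τO` of Player O: the supremum of the word-costs `wc` of the
outcomes of plays consistent with `τO`. -/
def stratCost [Inhabited I] (wc : (ℕ → I × O) → ℕ∞) (f : ℕ → ℕ) (τO : List I → O) : ℕ∞ :=
  ⨆ (u : ℕ → List I) (v : ℕ → O)
    (_ : (∀ i, (u i).length = f i) ∧ ∀ i, v i = τO (oHist u i)),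
    wc (fun n => (flatWord u n, v n))

/-- An optimal winning strategy for Player O in `Γ_f(L)` exists and has cost `c`. -/
def OptimalCostIs [Inhabited I] (L : Set (ℕ → I × O)) (wc : (ℕ → I × O) → ℕ∞)
    (f : ℕ → ℕ) (c : ℕ∞) : Prop :=
  (∃ τO, OWinning f L τO ∧ stratCost wc f τO = c) ∧
  ∀ τO, OWinning f L τO → c ≤ stratCost wc f τO

end DelayGames

/-- The cost `limsup_n Cor(ρ(w), n)` of the run of `M` on an infinite word `w`. -/
def PACost.wCost {Q I O : Type} (M : PACost Q (I × O)) : (ℕ → I × O) → ℕ∞ :=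
  fun w => Filter.limsup (fun n => PACost.Cor M M.qI w n) Filter.atTop

namespace DG

section Parity
variable {T V : Type} (R : T → T → Prop) (col : T → ℕ)

/-- Steps from nodes of color at most `p`. -/
def Gs (p : ℕ) (x y : T) : Prop := R x y ∧ col x ≤ p

/-- `y` is below `x`: reachable through colors at most `p`, with color `p` in the last step. -/
def Wr (p : ℕ) (y x : T) : Prop :=
  ∃ x', Relation.ReflTransGen (Gs R col p) x x' ∧ col x' = p ∧ Gs R col p x' y

def Dn (p : ℕ) (B : T → Prop) : ℕ → T → Prop
  | 0, x => col x = p ∧ ∃ y, Gs R col p x y ∧ B y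
  | n + 1, x => ∃ y, Gs R col p x y ∧ Dn p B n y

theorem wr_wf (p : ℕ) 
    (h : ∀ t : ℕ → T, (∀ i, R (t i) (t (i+1))) → (∀ i, col (t i) ≤ p) →
      ¬ (∀ N, ∃ i, N ≤ i ∧ col (t i) = p)) : WellFounded (Wr R col p) := by
  constructor
  by_contra hna
  push Not at hna
  obtain ⟨a, ha⟩ := hna
  set B : T → Prop := fun x => ¬ Acc (Wr R col p) x with hB
  -- every bad node has a distance
  have hd : ∀ x, B x → ∃ n, Dn R col p B n x := by
    intro x hx
    have : ∃ y, Wr R col p y x ∧ B y := by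
      by_contra hc
      push Not at hc
      exact hx ⟨x, fun y hy => by simpa [hB] using hc y hy⟩
    obtain ⟨y, ⟨x', h1, h2, h3⟩, hy⟩ := this
    induction h1 using Relation.ReflTransGen.head_induction_on with
    | refl => exact ⟨0, h2, y, h3, hy⟩
    | head hab hbc ih =>
      rename_i u v
      have : B v := by
        intro hacc
        exact hy (hacc.inv ⟨x', hbc, h2, h3⟩)
      obtain ⟨n, hn⟩ := ih this
      exact ⟨n+1, v, hab, hn⟩
  have hdB : ∀ n x, Dn R col p B n x → B x := by
    intro n
    induction n with
    | zero =>
      rintro x ⟨h1, y, h2, h3⟩ hacc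
      exact h3 (hacc.inv ⟨x, .refl, h1, h2⟩)
    | succ n ih =>
      rintro x ⟨y, h1, h2⟩ hacc
      refine ih y h2 ⟨y, fun z hz => hacc.inv ?_⟩
      obtain ⟨x', a1, a2, a3⟩ := hz
      exact ⟨x', .head h1 a1, a2, a3⟩
  -- step on pairs (distance, node)
  have hst : ∀ s : {s : ℕ × T // Dn R col p B s.1 s.2}, ∃ s' : {s : ℕ × T // Dn R col p B s.1 s.2},
      Gs R col p s.1.2 s'.1.2 ∧ (col s.1.2 = p ∨ s.1.1 = s'.1.1 + 1) := by
    rintro ⟨⟨n, x⟩, hs⟩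
    cases n with
    | zero =>
      obtain ⟨h1, y, h2, h3⟩ := hs
      obtain ⟨n, hn⟩ := hd y h3
      exact ⟨⟨(n, y), hn⟩, h2, Or.inl h1⟩
    | succ n =>
      obtain ⟨y, h1, h2⟩ := hs
      exact ⟨⟨(n, y), h2⟩, h1, Or.inr rfl⟩
  choose nx hnx using hst
  obtain ⟨n0, hn0⟩ := hd a ha
  let s : ℕ → {s : ℕ × T // Dn R col p B s.1 s.2} := fun i => nx^[i] ⟨(n0, a), hn0⟩
  have hs : ∀ i, s (i+1) = nx (s i) := fun i => Function.iterate_succ_apply' _ _ _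
  refine h (fun i => (s i).1.2) (fun i => ?_) (fun i => (hnx (s i)).1.2) ?_
  · rw [hs]; exact (hnx (s i)).1.1
  · intro N
    by_contra hc
    push Not at hc
    have : ∀ j, (s N).1.1 = (s (N+j)).1.1 + j := by
      intro j
      induction j with
      | zero => rfl
      | succ j ih =>
        have h1 := (hnx (s (N+j))).2.resolve_left (hc _ (by omega))
        rw [← hs] at h1
        rw [ih, h1]; simp only [← add_assoc]; omega
    have := this ((s N).1.1 + 1)
    omega

/-- No odd cycle along minimal selections. -/
theorem no_odd_cycle [Nonempty T] (D : ℕ) (hD : ∀ t, col t ≤ D) (vert : T → V)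
    (hpar : ∀ t : ℕ → T, (∀ i, R (t i) (t (i+1))) → ∀ p, Odd p → (∀ i, col (t i) ≤ p) →
      ¬ (∀ N, ∃ i, N ≤ i ∧ col (t i) = p)) :
    ∃ sel : V → T, (∀ v t, vert t = v → vert (sel v) = v) ∧
      ∀ (x : ℕ → V), (∀ i, ∃ t, vert t = x i) →
        (∀ i, ∃ t', R (sel (x i)) t' ∧ vert t' = x (i+1)) →
        ∀ p, Odd p → ∀ i j, i < j → x i = x j → (∀ l, i ≤ l → l < j → col (sel (x l)) ≤ p) →
          ¬ ∃ l, i ≤ l ∧ l < j ∧ col (sel (x l)) = p := by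
  have hwf : ∀ p, Odd p → WellFounded (Wr R col p) := fun p hp =>
    wr_wf R col p (fun t h1 h2 => hpar t h1 p hp h2)
  let mu : ℕ → T → Ordinal.{0} := fun p t => if hp : Odd p then
    ((hwf p hp).apply t).rank else 0
  have mu_le : ∀ p, ∀ x y, R x y → col x ≤ p → mu p y ≤ mu p x := by
    intro p x y hxy hc
    by_cases hp : Odd p
    · simp only [mu, hp, dif_pos]
      rw [Acc.rank_eq]
      apply Ordinal.iSup_le
      rintro ⟨z, x', h1, h2, h3⟩
      rw [Order.succ_le_iff]
      exact Acc.rank_lt_of_rel _ ⟨x', .head ⟨hxy, hc⟩ h1, h2, h3⟩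
    · simp [mu, hp]
  have mu_lt : ∀ p, Odd p → ∀ x y, R x y → col x = p → mu p y < mu p x := by
    intro p hp x y hxy hc
    simp only [mu, hp, dif_pos]
    exact Acc.rank_lt_of_rel _ ⟨x, .refl, hc, hxy, hc.le⟩
  let key : T → Lex (Fin (D+1) → Ordinal.{0}) := fun t => toLex (fun i => mu (D - i) t)
  let tr : ℕ → Lex (Fin (D+1) → Ordinal.{0}) → Lex (Fin (D+1) → Ordinal.{0}) :=
    fun p a => toLex (fun i => if p ≤ D - i then ofLex a i else 0)
  have tr_mono : ∀ p a b, a ≤ b → tr p a ≤ tr p b := by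
    intro p a b hab
    rcases hab.eq_or_lt with rfl | hlt
    · exact le_rfl
    · obtain ⟨i, h1, h2⟩ := hlt
      by_cases hi : p ≤ D - i
      · refine le_of_lt ⟨i, fun j hj => ?_, ?_⟩
        · have := h1 j hj
          change (if p ≤ D - j then ofLex a j else 0) = (if p ≤ D - j then ofLex b j else 0)
          split_ifs
          · exact this
          · rfl
        · change (if p ≤ D - i then ofLex a i else 0) < (if p ≤ D - i then ofLex b i else 0)
          rw [if_pos hi, if_pos hi]; exact h2
      · refine le_of_eq ?_
        simp only [tr]
        congr 1
        funext j
        split_ifs with hj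
        · apply h1
          rw [Fin.lt_def]; omega
        · rfl
  have hw : WellFounded (fun a b : Lex (Fin (D+1) → Ordinal.{0}) => a < b) := wellFounded_lt
  let sel : V → T := fun v =>
    if hne : ∃ t', vert t' = v then
      (InvImage.wf key hw).min {t' | vert t' = v} hne else Classical.arbitrary T
  have sel_mem : ∀ v t, vert t = v → vert (sel v) = v := by
    intro v t ht
    have hne : ∃ t', vert t' = v := ⟨t, ht⟩
    simp only [sel, hne, dif_pos]
    exact (InvImage.wf key hw).min_mem {t' | vert t' = v} hne
  have sel_min : ∀ v t', vert t' = v → key (sel v) ≤ key t' := by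
    intro v t' ht
    have hne : ∃ t', vert t' = v := ⟨t', ht⟩
    simp only [sel, hne, dif_pos]
    exact not_lt.1 ((InvImage.wf key hw).not_lt_min {t' | vert t' = v} ht)
  refine ⟨sel, sel_mem, ?_⟩
  · intro x hx hstep p hp i j hij hxij hle ⟨l, hil, hlj, hl⟩
    let s : ℕ → T := fun i => sel (x i)
    have hss : s i = s j := by simp only [s, hxij]
    have step_le : ∀ m, i ≤ m → m < j → tr p (key (s (m+1))) ≤ tr p (key (s m)) := by
      intro m h1 h2
      obtain ⟨t', hR, hv⟩ := hstep m
      have a1 : key (s (m+1)) ≤ key t' := sel_min _ _ hv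
      refine (tr_mono p _ _ a1).trans (Pi.toLex_monotone ?_)
      intro ii
      simp only [key, ofLex_toLex]
      split_ifs with hc
      · exact mu_le _ _ _ hR ((hle m h1 h2).trans hc)
      · exact le_rfl
    have step_lt : tr p (key (s (l+1))) < tr p (key (s l)) := by
      obtain ⟨t', hR, hv⟩ := hstep l
      have a1 : key (s (l+1)) ≤ key t' := sel_min _ _ hv
      refine (tr_mono p _ _ a1).trans_lt (Pi.toLex_strictMono ?_)
      rw [Pi.lt_def]
      refine ⟨?_, ⟨D - p, by omega⟩, ?_⟩
      · intro ii
        simp only [key, ofLex_toLex]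
        split_ifs with hc
        · exact mu_le _ _ _ hR (hl.le.trans hc)
        · exact le_rfl
      · have hpD : p ≤ D := hl ▸ hD _
        have : D - (D - p) = p := by omega
        simp only [key, ofLex_toLex, this, le_refl, if_true]
        exact mu_lt p hp _ _ hR hl
    have chain : ∀ m n, i ≤ m → m + n ≤ j → tr p (key (s (m+n))) ≤ tr p (key (s m)) := by
      intro m n h1 h2
      induction n with
      | zero => exact le_rfl
      | succ n ih =>
        exact (step_le (m+n) (by omega) (by omega)).trans (ih (by omega))
    have c1 := chain i (l - i) le_rfl (by omega)
    have c2 := chain (l+1) (j - (l+1)) (by omega) (by omega)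
    rw [show i + (l - i) = l by omega] at c1
    rw [show l + 1 + (j - (l+1)) = j by omega] at c2
    have := (c2.trans_lt step_lt).trans_le c1
    rw [hss] at this
    exact lt_irrefl _ this
end Parity

section Words
variable {I O A : Type}

/-- Prefix of length `m` of an infinite word. -/
def pre (α : ℕ → A) (m : ℕ) : List A := (List.range m).map α

theorem pre_congr {α β : ℕ → A} {m : ℕ} (h : ∀ j, j < m → α j = β j) : pre α m = pre β m :=
  List.map_congr_left fun j hj => h j (List.mem_range.1 hj)

theorem seg_congr {α β : ℕ → A} {m n : ℕ} (h : ∀ j, m ≤ j → j < n → α j = β j) :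
    seg α m n = seg β m n := by
  refine List.map_congr_left fun j hj => h _ (by omega) ?_
  have := List.mem_range.1 hj
  omega

theorem seg_length (α : ℕ → A) (m n : ℕ) : (seg α m n).length = n - m := by simp [seg]

theorem seg_self (α : ℕ → A) (m : ℕ) : seg α m m = [] := by simp [seg]

theorem seg_succ (α : ℕ → A) (m n : ℕ) (h : m ≤ n) : seg α m (n+1) = seg α m n ++ [α n] := by
  simp only [seg]
  rw [show n + 1 - m = (n - m) + 1 by omega, List.range_succ, List.map_append]
  simp only [List.map_cons, List.map_nil]
  rw [show m + (n - m) = n by omega]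

theorem seg_map {B : Type} (g : A → B) (α : ℕ → A) (m n : ℕ) :
    (seg α m n).map g = seg (fun j => g (α j)) m n := by
  simp [seg, Function.comp_def]

/-- Total number of letters of the first `i` blocks. -/
def Fs (f : ℕ → ℕ) (i : ℕ) : ℕ := ∑ j ∈ Finset.range i, f j

theorem Fs_succ (f : ℕ → ℕ) (i : ℕ) : Fs f (i+1) = Fs f i + f i := Finset.sum_range_succ _ _

theorem Fs_mono (f : ℕ → ℕ) : Monotone (Fs f) :=
  monotone_nat_of_le_succ fun i => by rw [Fs_succ]; omega

theorem le_Fs (f : ℕ → ℕ) (hf : DelayFn f) (i : ℕ) : i ≤ Fs f i := by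
  induction i with
  | zero => omega
  | succ i ih => rw [Fs_succ]; have := hf i; omega

theorem oHist_succ (u : ℕ → List I) (i : ℕ) : oHist u (i+1) = oHist u i ++ u (i+1) := by
  simp only [oHist]
  rw [List.range_succ, List.map_append, List.flatten_append]
  simp

theorem oHist_length (f : ℕ → ℕ) (u : ℕ → List I) (h : ∀ i, (u i).length = f i) (i : ℕ) :
    (oHist u i).length = Fs f (i+1) := by
  induction i with
  | zero => simp [oHist, Fs, h]
  | succ i ih => rw [oHist_succ, List.length_append, ih, h, Fs_succ f (i+1)]

theorem oHist_pfx (u : ℕ → List I) (i j : ℕ) (h : i ≤ j) : oHist u i <+: oHist u j := by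
  induction j, h using Nat.le_induction with
  | base => exact List.prefix_rfl
  | succ j _ ih => rw [oHist_succ]; exact ih.trans (List.prefix_append _ _)

theorem oHist_eq [Inhabited I] (f : ℕ → ℕ) (hf : DelayFn f) (u : ℕ → List I)
    (h : ∀ i, (u i).length = f i) (i : ℕ) :
    oHist u i = pre (flatWord u) (Fs f (i+1)) := by
  apply List.ext_getElem
  · simp [pre, oHist_length f u h]
  · intro j h1 h2
    simp only [pre, List.getElem_map, List.getElem_range]
    have h3 : j < (oHist u j).length := by
      rw [oHist_length f u h]; have := le_Fs f hf (j+1); omega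
    have : flatWord u j = (oHist u j)[j] := by
      show (oHist u j).getD j default = _
      rw [List.getD_eq_getElem _ _ h3]
    rw [this]
    rcases le_total i j with hij | hij
    · exact (oHist_pfx u i j hij).getElem h1
    · exact ((oHist_pfx u j i hij).getElem h3).symm

/-- The outcome of the strategy `σ` on the infinite input `α`. -/
def out (f : ℕ → ℕ) (σ : List I → O) (α : ℕ → I) : ℕ → I × O :=
  fun n => (α n, σ (pre α (Fs f (n+1))))

theorem out_congr (f : ℕ → ℕ) (hf : DelayFn f) (σ : List I → O) {α β : ℕ → I} {b c : ℕ}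
    (hbc : Fs f b ≤ c) (h : ∀ j, j < c → α j = β j) (j : ℕ) (hj : j < b) :
    out f σ α j = out f σ β j := by
  have h1 := Fs_mono f (show j + 1 ≤ b by omega)
  have h2 := le_Fs f hf (j+1)
  simp only [out]
  rw [h j (by omega), pre_congr (fun l hl => h l (by omega))]

theorem owin_out [Inhabited I] (f : ℕ → ℕ) (hf : DelayFn f) (L : Set (ℕ → I × O))
    (σ : List I → O) (h : OWinning f L σ) (α : ℕ → I) : out f σ α ∈ L := by
  let u : ℕ → List I := fun i => (List.range (f i)).map fun j => α (Fs f i + j)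
  have hu : ∀ i, (u i).length = f i := fun i => by simp [u]
  have hh : ∀ i, oHist u i = pre α (Fs f (i+1)) := by
    intro i
    induction i with
    | zero => simp [oHist, u, pre, Fs]
    | succ i ih =>
      rw [oHist_succ, ih, Fs_succ f (i+1), pre, pre, List.range_add, List.map_append,
        List.map_map]
      rfl
  have hfl : ∀ n, flatWord u n = α n := by
    intro n
    show (oHist u n).getD n default = _
    have := le_Fs f hf (n+1)
    rw [hh, List.getD_eq_getElem _ _ (by simp [pre]; omega)]
    simp [pre]
  have := h u (fun i => σ (oHist u i)) hu (fun _ => rfl)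
  simp only [hfl, hh] at this
  exact this

end Words

section Summ
variable {Q I O A : Type} (M : PACost Q A)

abbrev Sm (Q : Type) := Q × ℕ × ℕ × Bool

def upE (e c : ℕ) : ℕ := if Even c then max e c else e
def upO (o c : ℕ) : ℕ := if Even c then (if o < c then 0 else o) else max o c

/-- One-letter update of a summary: state, largest even color, largest open request, increment
flag. -/
def stp (s : Sm Q) (a : A) : Sm Q :=
  (M.δ s.1 a, upE s.2.1 (M.Ω (M.δ s.1 a)), upO s.2.2.1 (M.Ω (M.δ s.1 a)), s.2.2.2 || M.Cst s.1 a)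

def summ (q : Q) (z : List A) : Sm Q := z.foldl (stp M) (q, 0, 0, false)

/-- Summary of the block `[a, b)` of the run on `w`. -/
def bsum (w : ℕ → A) (a b : ℕ) : Sm Q := summ M (M.stateAt M.qI w a) (seg w a b)

theorem stateAt_congr (q : Q) {w w' : ℕ → A} {b : ℕ} (h : ∀ j, j < b → w j = w' j) (j : ℕ)
    (hj : j ≤ b) : M.stateAt q w j = M.stateAt q w' j := by
  induction j with
  | zero => rfl
  | succ j ih => simp only [PACost.stateAt]; rw [ih (by omega), h j (by omega)]

theorem bsum_congr {w w' : ℕ → A} {a b : ℕ} (hab : a ≤ b) (h : ∀ j, j < b → w j = w' j) :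
    bsum M w a b = bsum M w' a b := by
  simp only [bsum]
  rw [stateAt_congr M _ h a hab, seg_congr (fun j _ hj => h j hj)]

/-- Color at position `j`. -/
def cl (w : ℕ → A) (j : ℕ) : ℕ := M.Ω (M.stateAt M.qI w j)

def incr (w : ℕ → A) (j : ℕ) : Prop := M.Cst (M.stateAt M.qI w j) (w j) = true

theorem cl_congr {w w' : ℕ → A} {b : ℕ} (h : ∀ j, j < b → w j = w' j) (j : ℕ)
    (hj : j ≤ b) : cl M w j = cl M w' j := by
  simp only [cl]; rw [stateAt_congr M _ h j hj]

/-- The specification of the summary of `(a, b]`. -/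
structure SumSpec (w : ℕ → A) (a b : ℕ) (s : Sm Q) : Prop where
  st : s.1 = M.stateAt M.qI w b
  e_even : Even s.2.1
  e_ub : ∀ j, a < j → j ≤ b → Even (cl M w j) → cl M w j ≤ s.2.1
  e_att : s.2.1 ≠ 0 → ∃ j, a < j ∧ j ≤ b ∧ cl M w j = s.2.1
  o_att : s.2.2.1 ≠ 0 → Odd s.2.2.1 ∧ ∃ j, a < j ∧ j ≤ b ∧ cl M w j = s.2.2.1 ∧
    ∀ j', j < j' → j' ≤ b → Even (cl M w j') → cl M w j' ≤ s.2.2.1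
  o_ub : ∀ j, a < j → j ≤ b → Odd (cl M w j) → cl M w j ≤ s.2.2.1 ∨
    ∃ j', j < j' ∧ j' ≤ b ∧ Even (cl M w j') ∧ cl M w j < cl M w j'
  flag : s.2.2.2 = true ↔ ∃ j, a ≤ j ∧ j < b ∧ incr M w j

theorem bsum_spec (w : ℕ → A) (a b : ℕ) (hab : a ≤ b) : SumSpec M w a b (bsum M w a b) := by
  induction b, hab using Nat.le_induction with
  | base =>
    simp only [bsum, seg_self, summ, List.foldl_nil]
    constructor <;> simp <;> intros <;> omega
  | succ b hab ih =>
    set s := bsum M w a b with hs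
    have hb : bsum M w a (b+1) = stp M s (w b) := by
      simp only [hs, bsum, seg_succ w a b hab, summ, List.foldl_append, List.foldl_cons,
        List.foldl_nil]
    rw [hb]
    have hst : M.δ s.1 (w b) = M.stateAt M.qI w (b+1) := by
      rw [ih.st]; rfl
    have hc : M.Ω (M.δ s.1 (w b)) = cl M w (b+1) := by rw [hst]; rfl
    obtain ⟨i1, i2, i3, i4, i5, i6, i7⟩ := ih
    have split : ∀ j, j ≤ b + 1 → j ≤ b ∨ j = b + 1 := fun j hj => by omega
    refine ⟨hst, ?_, ?_, ?_, ?_, ?_, ?_⟩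
    · simp only [stp, hc, upE]
      split_ifs with h
      · rcases max_choice s.2.1 (cl M w (b+1)) with h' | h' <;> rw [h'] <;> assumption
      · exact i2
    · intro j h1 h2 h3
      simp only [stp, hc, upE]
      rcases split j h2 with h2 | rfl
      · have := i3 j h1 h2 h3
        split_ifs <;> omega
      · rw [if_pos h3]; omega
    · simp only [stp, hc, upE]
      have old : s.2.1 ≠ 0 → ∃ j, a < j ∧ j ≤ b + 1 ∧ cl M w j = s.2.1 := fun h => by
        obtain ⟨j, h1, h2, h3⟩ := i4 h
        exact ⟨j, h1, by omega, h3⟩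
      split_ifs with h
      · rcases max_choice s.2.1 (cl M w (b+1)) with h' | h' <;> rw [h']
        · exact old
        · intro _; exact ⟨b+1, by omega, le_rfl, rfl⟩
      · exact old
    · simp only [stp, hc, upO]
      have old : s.2.2.1 ≠ 0 → (Even (cl M w (b+1)) → cl M w (b+1) ≤ s.2.2.1) →
          Odd s.2.2.1 ∧ ∃ j, a < j ∧ j ≤ b + 1 ∧ cl M w j = s.2.2.1 ∧
          ∀ j', j < j' → j' ≤ b + 1 → Even (cl M w j') → cl M w j' ≤ s.2.2.1 := by
        intro h hn
        obtain ⟨h0, j, h1, h2, h3, h4⟩ := i5 h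
        refine ⟨h0, j, h1, by omega, h3, fun j' a1 a2 a3 => ?_⟩
        rcases split j' a2 with a2 | rfl
        · exact h4 j' a1 a2 a3
        · exact hn a3
      split_ifs with h h'
      · simp
      · intro h0; exact old h0 (fun _ => by omega)
      · rcases max_choice s.2.2.1 (cl M w (b+1)) with h' | h' <;> rw [h']
        · intro h0; exact old h0 (fun h'' => absurd h'' h)
        · intro _; refine ⟨Nat.not_even_iff_odd.1 h, b+1, by omega, le_rfl, rfl, ?_⟩
          intro j' a1 a2; omega
    · intro j h1 h2 h3
      simp only [stp, hc, upO]
      rcases split j h2 with h2 | rfl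
      · rcases i6 j h1 h2 h3 with h4 | ⟨j', h4, h5, h6⟩
        · split_ifs with h h'
          · by_cases hlt : cl M w j < cl M w (b+1)
            · exact Or.inr ⟨b+1, by omega, le_rfl, h, hlt⟩
            · omega
          · exact Or.inl h4
          · left; omega
        · exact Or.inr ⟨j', h4, by omega, h6⟩
      · rw [if_neg (Nat.not_even_iff_odd.2 h3)]; left; omega
    · simp only [stp, Bool.or_eq_true, i7]
      rw [i1]
      constructor
      · rintro (⟨j, h1, h2, h3⟩ | h)
        · exact ⟨j, h1, by omega, h3⟩
        · exact ⟨b, hab, by omega, h⟩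
      · rintro ⟨j, h1, h2, h3⟩
        rcases (show j < b ∨ j = b by omega) with h | rfl
        · exact Or.inl ⟨j, h1, h, h3⟩
        · exact Or.inr h3

theorem segCost_add (w : ℕ → A) (q : Q) (a b c : ℕ) (h1 : a ≤ b) (h2 : b ≤ c) :
    M.segCost q w a c = M.segCost q w a b + M.segCost q w b c := by
  simp only [PACost.segCost]
  rw [← Finset.Ico_union_Ico_eq_Ico h1 h2, Finset.filter_union, Finset.card_union_of_disjoint]
  exact Finset.disjoint_filter_filter (Finset.Ico_disjoint_Ico_consecutive a b c)

theorem segCost_le (w : ℕ → A) (q : Q) (a b : ℕ) : M.segCost q w a b ≤ b - a := by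
  simp only [PACost.segCost]
  exact (Finset.card_filter_le _ _).trans (by simp)

theorem segCost_pos (w : ℕ → A) (a b j : ℕ) (h1 : a ≤ j) (h2 : j < b) (h3 : incr M w j) :
    1 ≤ M.segCost M.qI w a b := by
  simp only [PACost.segCost]
  exact Finset.card_pos.2 ⟨j, by simp only [Finset.mem_filter, Finset.mem_Ico]; exact ⟨⟨h1, h2⟩, h3⟩⟩

theorem segCost_zero (w : ℕ → A) (a b : ℕ) (h : ¬ ∃ j, a ≤ j ∧ j < b ∧ incr M w j) :
    M.segCost M.qI w a b = 0 := by
  simp only [PACost.segCost]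
  rw [Finset.card_eq_zero, Finset.filter_eq_empty_iff]
  intro j hj hi
  rw [Finset.mem_Ico] at hj
  exact h ⟨j, hj.1, hj.2, hi⟩

theorem segCost_congr (q : Q) {w w' : ℕ → A} {a b : ℕ} (h : ∀ j, j < b → w j = w' j) :
    M.segCost q w a b = M.segCost q w' a b := by
  simp only [PACost.segCost]
  congr 1
  apply Finset.filter_congr
  intro j hj
  rw [Finset.mem_Ico] at hj
  rw [stateAt_congr M q h j (by omega), h j hj.2]

/-- Lower bound on the cost of response. -/
theorem le_cor (w : ℕ → A) (m b B : ℕ) (hm : Odd (cl M w m)) (hmb : m ≤ b)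
    (hun : ∀ j, m < j → j ≤ b → Even (cl M w j) → cl M w j ≤ cl M w m)
    (hB : B ≤ M.segCost M.qI w m b) : (B : ℕ∞) ≤ M.Cor M.qI w m := by
  unfold PACost.Cor
  rw [if_neg (show ¬ Even (M.Ω (M.stateAt M.qI w m)) from Nat.not_even_iff_odd.2 hm)]
  apply le_sInf
  rintro c ⟨n', h1, ⟨_, h2, h3⟩, rfl⟩
  have : b < n' := by
    by_contra hc
    have := hun n' h1 (by omega) h3
    simp only [cl] at this
    omega
  have h4 := segCost_add M w M.qI m b n' hmb this.le
  exact_mod_cast (by omega : B ≤ M.segCost M.qI w m n')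

theorem cor_top (w : ℕ → A) (m : ℕ) (hm : Odd (cl M w m)) 
    (hun : ∀ j, m < j → Even (cl M w j) → cl M w j ≤ cl M w m) : M.Cor M.qI w m = ⊤ := by
  unfold PACost.Cor
  rw [if_neg (show ¬ Even (M.Ω (M.stateAt M.qI w m)) from Nat.not_even_iff_odd.2 hm)]
  rw [sInf_eq_top]
  rintro c ⟨n', h1, ⟨_, h2, h3⟩, rfl⟩
  have := hun n' h1 h3
  simp only [cl] at this
  omega

theorem cor_le (w : ℕ → A) (m n' B : ℕ) (h1 : m < n') (h2 : Even (cl M w n'))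
    (h3 : cl M w m < cl M w n') (hB : M.segCost M.qI w m n' ≤ B) :
    M.Cor M.qI w m ≤ (B : ℕ∞) := by
  unfold PACost.Cor
  split_ifs
  · exact bot_le
  · refine le_trans (b := ((M.segCost M.qI w m n' : ℕ) : ℕ∞)) (sInf_le ?_) ?_
    · exact ⟨n', h1, ⟨⟨_, rfl⟩, h3, h2⟩, rfl⟩
    exact_mod_cast hB

theorem accepting_bound (w : ℕ → A) (h : w ∈ M.Lang) :
    ∃ B N : ℕ, ∀ m, N ≤ m → M.Cor M.qI w m ≤ (B : ℕ∞) := by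
  have h : Filter.limsup (fun n => M.Cor M.qI w n) Filter.atTop < ⊤ := h
  obtain ⟨B, hB⟩ := ENat.ne_top_iff_exists.1 h.ne
  have h2 : Filter.limsup (fun n => M.Cor M.qI w n) Filter.atTop < ((B + 1 : ℕ) : ℕ∞) := by
    rw [← hB]; exact_mod_cast Nat.lt_succ_self B
  have := Filter.eventually_lt_of_limsup_lt h2
  obtain ⟨N, hN⟩ := Filter.eventually_atTop.1 this
  exact ⟨B+1, N, fun m hm => (hN m hm).le⟩

end Summ

section Types
variable {Q I O : Type} [Fintype Q] (M : PACost Q (I × O))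

/-- Colors, together with `0`. -/
def Cs : Finset ℕ := insert 0 (Finset.univ.image M.Ω)

def Sset : Finset (Sm Q) := Finset.univ ×ˢ (Cs M ×ˢ (Cs M ×ˢ Finset.univ))

def bigS : Finset (Q × Sm Q) := Finset.univ ×ˢ Sset M

theorem mem_Sset (s : Sm Q) : s ∈ Sset M ↔ s.2.1 ∈ Cs M ∧ s.2.2.1 ∈ Cs M := by
  simp [Sset, Finset.mem_product]

theorem zero_mem_Cs : 0 ∈ Cs M := Finset.mem_insert_self _ _

theorem stp_mem (s : Sm Q) (h : s ∈ Sset M) (a : I × O) : stp M s a ∈ Sset M := by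
  rw [mem_Sset] at h ⊢
  have hc : M.Ω (M.δ s.1 a) ∈ Cs M :=
    Finset.mem_insert_of_mem (Finset.mem_image_of_mem _ (Finset.mem_univ _))
  have h0 := zero_mem_Cs M
  simp only [stp, upE, upO]
  constructor
  · split_ifs
    · rcases max_choice s.2.1 (M.Ω (M.δ s.1 a)) with h' | h' <;> rw [h']
      exacts [h.1, hc]
    · exact h.1
  · split_ifs
    · exact h0
    · exact h.2
    · rcases max_choice s.2.2.1 (M.Ω (M.δ s.1 a)) with h' | h' <;> rw [h']
      exacts [h.2, hc]

theorem foldl_mem (z : List (I × O)) (s : Sm Q) (h : s ∈ Sset M) : z.foldl (stp M) s ∈ Sset M := by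
  induction z generalizing s with
  | nil => exact h
  | cons a z ih => exact ih _ (stp_mem M s h a)

theorem summ_mem (q : Q) (z : List (I × O)) : summ M q z ∈ Sset M :=
  foldl_mem M z _ ((mem_Sset M _).2 ⟨zero_mem_Cs M, zero_mem_Cs M⟩)

/-- The type (class) of an input word: all possible summaries. -/
def ty (w : List I) : Finset (Q × Sm Q) :=
  (bigS M).filter fun p => ∃ z : List (I × O), z.map Prod.fst = w ∧ summ M p.1 z = p.2

theorem mem_ty (w : List I) (q : Q) (s : Sm Q) :
    (q, s) ∈ ty M w ↔ ∃ z : List (I × O), z.map Prod.fst = w ∧ summ M q z = s := by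
  simp only [ty, Finset.mem_filter, and_iff_right_iff_imp]
  rintro ⟨z, -, rfl⟩
  simp [bigS, summ_mem]

theorem ty_append (u u' v : List I) (h : ty M u = ty M u') : ty M (u ++ v) = ty M (u' ++ v) := by
  have key : ∀ u u' : List I, ty M u = ty M u' → ∀ p, p ∈ ty M (u ++ v) → p ∈ ty M (u' ++ v) := by
    rintro u u' h ⟨q, s⟩ hp
    rw [mem_ty] at hp ⊢
    obtain ⟨z, h1, h2⟩ := hp
    obtain ⟨z1, z2, rfl, h3, h4⟩ := List.map_eq_append_iff.1 h1
    have : (q, summ M q z1) ∈ ty M u' := by rw [← h, mem_ty]; exact ⟨z1, h3, rfl⟩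
    obtain ⟨z1', h5, h6⟩ := (mem_ty M _ _ _).1 this
    refine ⟨z1' ++ z2, by rw [List.map_append, h5, h4], ?_⟩
    rw [← h2]
    simp only [summ, List.foldl_append] at h6 ⊢
    rw [h6]
  ext p
  exact ⟨key u u' h p, key u' u h.symm p⟩

/-- A class containing arbitrarily long words. -/
def InfC (C : Finset (Q × Sm Q)) : Prop := ∀ L : ℕ, ∃ w : List I, L ≤ w.length ∧ ty M w = C

theorem infC_of_length (w : List I) (h : 2 ^ (bigS M).card ≤ w.length) : InfC M (ty M w) := by
  have hm : ∀ i ∈ Finset.range (w.length + 1), ty M (w.take i) ∈ (bigS M).powerset := fun i _ =>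
    Finset.mem_powerset.2 (Finset.filter_subset _ _)
  obtain ⟨i, hi, j, hj, hne, heq⟩ := Finset.exists_ne_map_eq_of_card_lt_of_maps_to
    (by rw [Finset.card_powerset, Finset.card_range]; omega) hm
  wlog hij : i < j generalizing i j
  · exact this j hj i hi hne.symm heq.symm (by omega)
  have hj' : j ≤ w.length := by have := Finset.mem_range.1 hj; omega
  set x := w.take i with hx
  set y := (w.take j).drop i with hy
  set z := w.drop j with hz
  have hxy : x ++ y = w.take j := by
    have : x = (w.take j).take i := by rw [List.take_take, min_eq_left hij.le]
    rw [this, hy, List.take_append_drop]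
  have hylen : 1 ≤ y.length := by simp [hy]; omega
  have hxyz : (x ++ y) ++ z = w := by rw [hxy, hz, List.take_append_drop]
  -- pump
  have pump : ∀ L, ∃ u : List I, L ≤ u.length ∧ ty M u = ty M x := by
    intro L
    induction L with
    | zero => exact ⟨x, by omega, rfl⟩
    | succ L ih =>
      obtain ⟨u, h1, h2⟩ := ih
      refine ⟨u ++ y, by rw [List.length_append]; omega, ?_⟩
      rw [ty_append M u x y h2, hxy, ← heq]
  intro L
  obtain ⟨u, h1, h2⟩ := pump L
  refine ⟨u ++ z, by rw [List.length_append]; omega, ?_⟩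
  rw [ty_append M u (x ++ y) z (by rw [h2, hxy, ← heq]), hxyz]

theorem bsum_mem_ty (w : ℕ → I × O) (a b : ℕ) :
    (M.stateAt M.qI w a, bsum M w a b) ∈ ty M (seg (fun j => (w j).1) a b) := by
  rw [mem_ty]
  exact ⟨seg w a b, seg_map _ _ _ _, rfl⟩

end Types

section Tree
variable {Q I O : Type} [Fintype Q] (M : PACost Q (I × O))

/-- A history of the block game, simulated with an actual play of the delay game. -/
structure Nd (I : Type) where
  α : ℕ → I
  a : ℕ
  b : ℕ
  c : ℕ
  o : ℕ
  r : ℕ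
  bd : ℕ

/-- Some request after `r` is unanswered until `b` with cost at least `bd`. -/
def rstW (w : ℕ → I × O) (r b bd : ℕ) : Prop :=
  ∃ m, r ≤ m ∧ m ≤ b ∧ Odd (cl M w m) ∧
    (∀ j, m < j → j ≤ b → Even (cl M w j) → cl M w j ≤ cl M w m) ∧ bd ≤ M.segCost M.qI w m b

theorem rstW_congr {w w' : ℕ → I × O} {b : ℕ} (h : ∀ j, j < b → w j = w' j) (r bd : ℕ) :
    rstW M w r b bd → rstW M w' r b bd := by
  rintro ⟨m, h1, h2, h3, h4, h5⟩
  have hc := cl_congr M h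
  refine ⟨m, h1, h2, hc m h2 ▸ h3, fun j a1 a2 a3 => ?_, segCost_congr M _ h ▸ h5⟩
  rw [← hc j a2] at a3 ⊢
  rw [← hc m h2]
  exact h4 j a1 a2 a3

/-- The tracked request `o` is really open at position `a`. -/
def oinvW (w : ℕ → I × O) (o r a : ℕ) : Prop :=
  o ≠ 0 → Odd o ∧ ∃ m, r ≤ m ∧ m ≤ a ∧ cl M w m = o ∧
    ∀ j, m < j → j ≤ a → Even (cl M w j) → cl M w j ≤ o

theorem oinvW_congr {w w' : ℕ → I × O} {a : ℕ} (h : ∀ j, j < a → w j = w' j) (o r : ℕ) :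
    oinvW M w o r a → oinvW M w' o r a := by
  intro hh ho
  obtain ⟨h1, m, h2, h3, h4, h5⟩ := hh ho
  have hc := cl_congr M h
  refine ⟨h1, m, h2, h3, hc m h3 ▸ h4, fun j a1 a2 a3 => ?_⟩
  rw [← hc j a2] at a3 ⊢
  exact h5 j a1 a2 a3

def Top : ℕ := 2 * (Cs M).sup id + 1

def updo (o : ℕ) (s : Sm Q) : ℕ := max (if o < s.2.1 then 0 else o) s.2.2.1

def colf (rs : Prop) (o : ℕ) (s : Sm Q) : ℕ :=
  if rs then Top M else max (max s.2.1 s.2.2.1) (if s.2.2.2 = true then o else 0)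

theorem le_Top (x : ℕ) (h : x ∈ Cs M) : x < Top M := by
  have : x ≤ (Cs M).sup id := Finset.le_sup (f := id) h
  simp only [Top]; omega

theorem updo_mem (o : ℕ) (s : Sm Q) (ho : o ∈ Cs M) (hs : s ∈ Sset M) : updo o s ∈ Cs M := by
  rw [mem_Sset] at hs
  simp only [updo]
  rcases max_choice (if o < s.2.1 then 0 else o) s.2.2.1 with h' | h' <;> rw [h']
  · split_ifs
    exacts [zero_mem_Cs M, ho]
  · exact hs.2

variable (f : ℕ → ℕ) (σ : List I → O)

def blkS (t : Nd I) : Sm Q := bsum M (out f σ t.α) t.a t.b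

def rst (t : Nd I) : Prop := rstW M (out f σ t.α) t.r t.b t.bd

structure Valid (t : Nd I) : Prop where
  hab : t.a < t.b
  hbc : t.b < t.c
  hF : Fs f t.b ≤ t.c
  inf1 : InfC M (ty M (seg t.α t.a t.b))
  inf2 : InfC M (ty M (seg t.α t.b t.c))
  oCs : t.o ∈ Cs M
  hr : t.r ≤ t.a
  oinv : oinvW M (out f σ t.α) t.o t.r t.a

structure Rn (t t' : Nd I) : Prop where
  a : t'.a = t.b
  b : t'.b = t.c
  agree : ∀ j, j < t.c → t'.α j = t.α j
  o : t'.o = if rst M f σ t then 0 else updo t.o (blkS M f σ t)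
  r : t'.r = if rst M f σ t then t.b else t.r
  bd : t'.bd = if rst M f σ t then t.bd + 1 else t.bd

def colr (t : Nd I) : ℕ := colf M (rst M f σ t) t.o (blkS M f σ t)

theorem colf_le (rs : Prop) (o : ℕ) (s : Sm Q) (ho : o ∈ Cs M) (hs : s ∈ Sset M) :
    colf M rs o s ≤ Top M := by
  rw [mem_Sset] at hs
  have := le_Top M _ hs.1
  have := le_Top M _ hs.2
  have := le_Top M _ ho
  simp only [colf]
  split_ifs <;> omega

theorem cover (A : ℕ → ℕ) (hA : ∀ i, A i < A (i+1)) (j i0 : ℕ) (hj : A i0 < j) :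
    ∃ i, i0 ≤ i ∧ A i < j ∧ j ≤ A (i+1) := by
  have hmono := strictMono_nat_of_lt_succ hA
  have hex : ∃ i, j ≤ A i := ⟨j, hmono.le_apply⟩
  have h1 := Nat.find_spec hex
  have h2 : i0 < Nat.find hex := by
    by_contra hc
    have := hmono.monotone (not_lt.1 hc)
    omega
  refine ⟨Nat.find hex - 1, by omega, ?_, ?_⟩
  · exact not_le.1 (Nat.find_min hex (m := Nat.find hex - 1) (by omega))
  · rw [show Nat.find hex - 1 + 1 = Nat.find hex by omega]; exact h1

theorem tree_parity [Inhabited I] (hf : DelayFn f) (hσ : OWinning f M.Lang σ)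
    (t : ℕ → Nd I) (hv : ∀ i, Valid M f σ (t i)) (hR : ∀ i, Rn M f σ (t i) (t (i+1)))
    (p : ℕ) (hp : Odd p) (hle : ∀ i, colr M f σ (t i) ≤ p)
    (hio : ∀ N, ∃ i, N ≤ i ∧ colr M f σ (t i) = p) : False := by
  have hA : ∀ i, (t i).a < (t (i+1)).a := fun i => by rw [(hR i).a]; exact (hv i).hab
  have hAm := strictMono_nat_of_lt_succ hA
  have hai : ∀ i, i ≤ (t i).a := fun i => hAm.le_apply
  have hC : ∀ i, (t i).c < (t (i+1)).c := fun i => by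
    rw [← (hR i).b]; exact (hv (i+1)).hbc
  have hCm := strictMono_nat_of_lt_succ hC
  have agree : ∀ i k j, j < (t i).c → (t (i+k)).α j = (t i).α j := by
    intro i k j hj
    induction k with
    | zero => rfl
    | succ k ih =>
      rw [← ih]
      exact (hR (i+k)).agree j (hj.trans_le (hCm.monotone (by omega)))
  let α : ℕ → I := fun j => (t j).α j
  have hα : ∀ i j, j < (t i).c → (t i).α j = α j := by
    intro i j hj
    rcases le_total i j with h | h
    · obtain ⟨k, rfl⟩ := Nat.exists_eq_add_of_le h
      exact (agree i k _ hj).symm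
    · obtain ⟨k, rfl⟩ := Nat.exists_eq_add_of_le h
      have h1 := hai j
      have h2 := (hv j).hab
      have h3 := (hv j).hbc
      exact agree j k _ (by omega)
  set w := out f σ α with hw_def
  have hw : ∀ i j, j < (t i).b → out f σ (t i).α j = w j := fun i j hj =>
    out_congr f hf σ (hv i).hF (hα i) j hj
  have hS : ∀ i, blkS M f σ (t i) = bsum M w (t i).a (t i).b := fun i =>
    bsum_congr M (hv i).hab.le (hw i)
  have spec : ∀ i, SumSpec M w (t i).a (t i).b (blkS M f σ (t i)) := fun i => by
    rw [hS]; exact bsum_spec M w _ _ (hv i).hab.le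
  have hrs : ∀ i, rst M f σ (t i) ↔ rstW M w (t i).r (t i).b (t i).bd := fun i =>
    ⟨rstW_congr M (hw i) _ _, rstW_congr M (fun j hj => (hw i j hj).symm) _ _⟩
  have hoi : ∀ i, oinvW M w (t i).o (t i).r (t i).a := fun i =>
    oinvW_congr M (fun j hj => hw i j (hj.trans (hv i).hab)) _ _ (hv i).oinv
  obtain ⟨B, N0, hB⟩ := accepting_bound M w (owin_out f hf _ σ hσ α)
  have hbdm : ∀ i, (t i).bd ≤ (t (i+1)).bd := fun i => by
    rw [(hR i).bd]; split_ifs <;> omega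
  have hrm : ∀ i, (t i).r ≤ (t (i+1)).r := fun i => by
    rw [(hR i).r]
    have := (hv i).hr
    have := (hv i).hab
    split_ifs <;> omega
  have hbdm' := monotone_nat_of_le_succ hbdm
  have hrm' := monotone_nat_of_le_succ hrm
  by_cases hcase : ∀ N, ∃ i, N ≤ i ∧ rst M f σ (t i)
  · -- infinitely many resets
    have grow : ∀ N, ∃ i, N ≤ (t i).bd ∧ N ≤ (t i).r := by
      intro N
      induction N with
      | zero => exact ⟨0, by omega, by omega⟩
      | succ N ih =>
        obtain ⟨i0, h1, h2⟩ := ih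
        obtain ⟨i, h3, h4⟩ := hcase (max i0 (N+1))
        have h5 := hbdm' (show i0 ≤ i by omega)
        have h6 := hai i
        have h7 := (hv i).hab
        refine ⟨i+1, ?_, ?_⟩
        · rw [(hR i).bd, if_pos h4]; simp only at h5; omega
        · rw [(hR i).r, if_pos h4]; omega
    obtain ⟨i0, h1, h2⟩ := grow (max (B+1) N0)
    obtain ⟨i, h3, h4⟩ := hcase i0
    have h5 := hbdm' h3
    have h6 := hrm' h3
    simp only at h5 h6
    obtain ⟨m, k1, k2, k3, k4, k5⟩ := (hrs i).1 h4
    have h7 := le_cor M w m _ _ k3 k2 k4 k5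
    have h8 := h7.trans (hB m (by omega))
    have h9 : (t i).bd ≤ B := by exact_mod_cast h8
    omega
  · push Not at hcase
    obtain ⟨N, hN⟩ := hcase
    have hcol : ∀ i, N ≤ i → colr M f σ (t i) = max (max (blkS M f σ (t i)).2.1
        (blkS M f σ (t i)).2.2.1) (if (blkS M f σ (t i)).2.2.2 = true then (t i).o else 0) :=
      fun i hi => by simp only [colr, colf, if_neg (hN i hi)]
    have hele : ∀ i, N ≤ i → (blkS M f σ (t i)).2.1 ≤ p := fun i hi => by
      have h1 := hcol i hi
      have h2 := hle i
      omega
    have hosle : ∀ i, N ≤ i → (blkS M f σ (t i)).2.2.1 ≤ p := fun i hi => by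
      have h1 := hcol i hi
      have h2 := hle i
      omega
    have hun : ∀ j, (t N).a < j → Even (cl M w j) → cl M w j ≤ p := by
      intro j hj he
      obtain ⟨i, h1, h2, h3⟩ := cover (fun i => (t i).a) hA j N hj
      simp only [(hR i).a] at h3
      exact ((spec i).e_ub j h2 h3 he).trans (hele i h1)
    have hp0 : p ≠ 0 := by rintro rfl; simp at hp
    by_cases hos : ∀ N', ∃ i, N' ≤ i ∧ (blkS M f σ (t i)).2.2.1 = p
    · obtain ⟨i, h1, h2⟩ := hos (max N N0)
      obtain ⟨h3, j, h4, h5, h6, h7⟩ := (spec i).o_att (by omega)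
      have h8 : M.Cor M.qI w j = ⊤ := by
        apply cor_top M w j
        · rw [h6]; exact h3
        · intro j' h9 h10
          rw [h6, h2]
          refine hun j' ?_ h10
          have := hAm.monotone (show N ≤ i by omega)
          omega
      have h9 := hB j (by have := hai i; omega)
      rw [h8] at h9
      simp at h9
    · push Not at hos
      obtain ⟨N', hN'⟩ := hos
      have hfl : ∀ K, ∃ i, K ≤ i ∧ N ≤ i ∧ (blkS M f σ (t i)).2.2.2 = true ∧ (t i).o = p := by
        intro K
        obtain ⟨i, h1, h2⟩ := hio (max K (max N N'))
        have h3 := hcol i (by omega)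
        have h4 := hN' i (by omega)
        have h5 : (blkS M f σ (t i)).2.1 ≠ p := by
          intro h
          have := (spec i).e_even
          rw [h] at this
          exact Nat.not_even_iff_odd.2 hp this
        refine ⟨i, by omega, by omega, ?_⟩
        split_ifs at h3 with hfl
        · exact ⟨hfl, by omega⟩
        · omega
      obtain ⟨i3, -, hi3N, -, ho3⟩ := hfl 0
      have hconst : ∀ k, (t (i3+k)).o = p ∧ (t (i3+k)).r = (t i3).r ∧ (t (i3+k)).bd = (t i3).bd := by
        intro k
        induction k with
        | zero => exact ⟨ho3, rfl, rfl⟩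
        | succ k ih =>
          have h1 := hR (i3+k)
          have h2 := hN (i3+k) (by omega)
          have h3 := hele (i3+k) (by omega)
          have h4 := hosle (i3+k) (by omega)
          have := h1.o; have := h1.r; have := h1.bd
          rw [if_neg h2] at *
          simp only [← add_assoc]
          refine ⟨?_, by omega, by omega⟩
          rw [h1.o, if_neg h2, updo, ih.1, if_neg (by omega)]
          omega
      obtain ⟨-, m, m1, m2, m3, m4⟩ := hoi i3 (by omega)
      have hsc : ∀ K, ∃ k, K ≤ M.segCost M.qI w m (t (i3+k)).b := by
        intro K
        induction K with
        | zero => exact ⟨0, by omega⟩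
        | succ K ih =>
          obtain ⟨k, hk⟩ := ih
          obtain ⟨i, h1, -, h2, -⟩ := hfl (i3+k+1)
          obtain ⟨k', rfl⟩ := Nat.exists_eq_add_of_le (show i3 ≤ i by omega)
          refine ⟨k', ?_⟩
          obtain ⟨j, j1, j2, j3⟩ := (spec (i3+k')).flag.1 h2
          have h4 := hAm.monotone (show i3+k+1 ≤ i3+k' by omega)
          simp only [(hR (i3+k)).a] at h4
          have h5 := (hv (i3+k')).hab
          have h6 := hAm.monotone (show i3 ≤ i3+k by omega)
          have h7 := (hv (i3+k)).hab
          have e1 := segCost_add M w M.qI m (t (i3+k)).b (t (i3+k')).b (by omega) (by omega)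
          have e2 := segCost_pos M w (t (i3+k)).b (t (i3+k')).b j (by omega) j2 j3
          omega
      obtain ⟨k, hk⟩ := hsc (t i3).bd
      refine hN (i3+k) (by omega) ((hrs _).2 ⟨m, ?_, ?_, ?_, ?_, ?_⟩)
      · rw [(hconst k).2.1]; exact m1
      · have h6 := hAm.monotone (show i3 ≤ i3+k by omega)
        have h7 := (hv (i3+k)).hab
        omega
      · rw [m3, ho3]; exact hp
      · intro j j1 j2 j3
        rw [m3]
        by_cases hj : j ≤ (t i3).a
        · exact m4 j j1 hj j3
        · rw [ho3]
          have := hAm.monotone hi3N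
          exact hun j (by omega) j3
      · rw [(hconst k).2.2]; exact hk
end Tree

section Child
variable {Q I O : Type} [Fintype Q] (M : PACost Q (I × O)) (f : ℕ → ℕ) (σ : List I → O)

abbrev Vx (Q : Type) := Q × ℕ × Finset (Q × Sm Q) × Finset (Q × Sm Q)

def vert (t : Nd I) : Vx Q :=
  (M.stateAt M.qI (out f σ t.α) t.a, t.o, ty M (seg t.α t.a t.b), ty M (seg t.α t.b t.c))

def glue [Inhabited I] (α : ℕ → I) (c : ℕ) (w : List I) : ℕ → I :=
  fun j => if j < c then α j else w.getD (j - c) default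

theorem glue_lt [Inhabited I] (α : ℕ → I) (c : ℕ) (w : List I) (j : ℕ) (h : j < c) :
    glue α c w j = α j := if_pos h

theorem seg_glue [Inhabited I] (α : ℕ → I) (c : ℕ) (w : List I) :
    seg (glue α c w) c (c + w.length) = w := by
  apply List.ext_getElem
  · simp [seg]
  · intro j h1 h2
    simp [seg, glue, h2]

theorem child [Inhabited I] (hf : DelayFn f) (t : Nd I) (ht : Valid M f σ t)
    (C : Finset (Q × Sm Q)) (hC : InfC M C) :
    ∃ t', Valid M f σ t' ∧ Rn M f σ t t' ∧ vert M f σ t' =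
      ((blkS M f σ t).1, (if rst M f σ t then 0 else updo t.o (blkS M f σ t)),
        ty M (seg t.α t.b t.c), C) := by
  obtain ⟨w, hw1, hw2⟩ := hC (Fs f t.c + 1)
  set β := glue t.α t.c w with hβ
  have hag : ∀ j, j < t.c → t.α j = β j := fun j hj => (glue_lt _ _ _ _ hj).symm
  have hout : ∀ j, j < t.b → out f σ t.α j = out f σ β j := out_congr f hf σ ht.hF hag
  have hseg : seg β t.b t.c = seg t.α t.b t.c := seg_congr fun j _ h => (hag j h).symm
  have spec : SumSpec M (out f σ t.α) t.a t.b (blkS M f σ t) := bsum_spec M _ _ _ ht.hab.le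
  have hSm : blkS M f σ t ∈ Sset M := summ_mem M _ _
  refine ⟨⟨β, t.b, t.c, t.c + w.length, (if rst M f σ t then 0 else updo t.o (blkS M f σ t)),
    (if rst M f σ t then t.b else t.r), (if rst M f σ t then t.bd + 1 else t.bd)⟩, ?_, ?_, ?_⟩
  · refine ⟨ht.hbc, ?_, ?_, ?_, ?_, ?_, ?_, ?_⟩
    · simp only; omega
    · simp only; omega
    · simp only; rw [hseg]; exact ht.inf2
    · simp only; rw [hβ, seg_glue, hw2]; exact hC
    · simp only
      split_ifs
      · exact zero_mem_Cs M
      · exact updo_mem M _ _ ht.oCs hSm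
    · have := ht.hr
      have := ht.hab
      simp only
      split_ifs <;> omega
    · simp only
      refine oinvW_congr M hout _ _ ?_
      split_ifs with hr
      · intro h; exact absurd rfl h
      · intro hne
        have hab := ht.hab
        have hra := ht.hr
        simp only [updo] at hne ⊢
        rcases max_choice (if t.o < (blkS M f σ t).2.1 then 0 else t.o) (blkS M f σ t).2.2.1
          with h' | h' <;> rw [h'] at hne ⊢
        · split_ifs at hne ⊢ with hlt
          · exact absurd rfl hne
          · obtain ⟨h0, m, m1, m2, m3, m4⟩ := ht.oinv hne
            refine ⟨h0, m, m1, by omega, m3, fun j j1 j2 j3 => ?_⟩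
            by_cases hj : j ≤ t.a
            · exact m4 j j1 hj j3
            · have := spec.e_ub j (by omega) j2 j3
              omega
        · obtain ⟨h0, j, j1, j2, j3, j4⟩ := spec.o_att hne
          exact ⟨h0, j, by omega, j2, j3, j4⟩
  · exact ⟨rfl, rfl, fun j hj => (hag j hj).symm, rfl, rfl, rfl⟩
  · simp only [vert]
    rw [hseg]
    have h1 : seg β t.c (t.c + w.length) = w := seg_glue _ _ _
    rw [h1, hw2, ← stateAt_congr M M.qI hout t.b le_rfl, spec.st]

theorem init_node [Inhabited I] (C C' : Finset (Q × Sm Q)) (hC : InfC M C) (hC' : InfC M C') :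
    ∃ t, Valid M f σ t ∧ vert M f σ t = (M.qI, 0, C, C') := by
  obtain ⟨w, hw1, hw2⟩ := hC 1
  obtain ⟨w', hw1', hw2'⟩ := hC' (Fs f w.length + 1)
  set α : ℕ → I := glue (glue (fun _ => default) 0 w) w.length w' with hα
  have h1 : seg α 0 w.length = w := by
    rw [seg_congr (β := glue (fun _ => default) 0 w) (fun j _ hj => glue_lt _ _ _ _ hj)]
    have := seg_glue (fun _ => default) 0 w
    rwa [zero_add] at this
  have h2 : seg α w.length (w.length + w'.length) = w' := seg_glue _ _ _
  refine ⟨⟨α, 0, w.length, w.length + w'.length, 0, 0, 0⟩, ?_, ?_⟩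
  · refine ⟨?_, ?_, ?_, ?_, ?_, zero_mem_Cs M, le_rfl, fun h => absurd rfl h⟩
    · simp only; omega
    · simp only; omega
    · simp only; omega
    · simp only; rw [h1, hw2]; exact hC
    · simp only; rw [h2, hw2']; exact hC'
  · simp only [vert]
    rw [h1, h2, hw2, hw2']
    rfl

end Child

section Final
variable {Q I O : Type} [Fintype Q] (M : PACost Q (I × O))

theorem final_bound {V : Type} (w : ℕ → I × O) (d Nv : ℕ) (hd : 0 < d) (v : ℕ → V)
    (Vs : Finset V) (hVs : Vs.card ≤ Nv) (hv : ∀ x, v x ∈ Vs) (o : ℕ → ℕ) (rs : ℕ → Prop)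
    (s : ℕ → Sm Q) (hs : ∀ x, s x = bsum M w (x * d) ((x+1) * d))
    (hstep : ∀ x, o (x+1) = if rs x then 0 else updo (o x) (s x))
    (hodd : ∀ x, o x ≠ 0 → Odd (o x)) (hCs : ∀ x, o x ∈ Cs M)
    (hcyc : ∀ p, Odd p → ∀ i j, i < j → v i = v j →
      (∀ l, i ≤ l → l < j → colf M (rs l) (o l) (s l) ≤ p) →
      ¬ ∃ l, i ≤ l ∧ l < j ∧ colf M (rs l) (o l) (s l) = p) :
    M.wCost w ≤ (((Nv + 2) * d : ℕ) : ℕ∞) := by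
  have spec : ∀ x, SumSpec M w (x * d) ((x+1) * d) (s x) := fun x => by
    rw [hs]; exact bsum_spec M w _ _ (Nat.mul_le_mul_right d (by omega))
  have hTopodd : Odd (Top M) := ⟨_, rfl⟩
  have hbd : ∀ x, colf M (rs x) (o x) (s x) ≤ Top M := fun x =>
    colf_le M _ _ _ (hCs x) (by rw [hs]; exact summ_mem M _ _)
  set cx : ℕ → ℕ := fun x => colf M (rs x) (o x) (s x) with hcx
  -- the limsup color
  have hex : ∃ p, ∃ N, ∀ x, N ≤ x → cx x ≤ p := ⟨Top M, 0, fun x _ => hbd x⟩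
  obtain ⟨p, ⟨x0, hx0⟩, hpmin⟩ : ∃ p, (∃ N, ∀ x, N ≤ x → cx x ≤ p) ∧
      ∀ q, q < p → ¬ ∃ N, ∀ x, N ≤ x → cx x ≤ q :=
    ⟨Nat.find hex, Nat.find_spec hex, fun q hq => Nat.find_min hex hq⟩
  have hio : ∀ N, ∃ x, N ≤ x ∧ cx x = p := by
    intro N
    by_contra hc
    push Not at hc
    rcases Nat.eq_zero_or_pos p with rfl | hpos
    · have h1 := hx0 (max N x0) (by omega)
      exact hc (max N x0) (by omega) (by omega)
    · refine hpmin (p-1) (by omega) ⟨max N x0, fun x hx => ?_⟩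
      have h1 := hx0 x (by omega)
      have h2 := hc x (by omega)
      omega
  have hpe : Even p := by
    by_contra hpo
    rw [Nat.not_even_iff_odd] at hpo
    have hinf : {x | x0 ≤ x ∧ cx x = p}.Infinite := by
      rw [Set.infinite_iff_exists_gt]
      intro a
      obtain ⟨x, h1, h2⟩ := hio (max (a+1) x0)
      exact ⟨x, ⟨by omega, h2⟩, by omega⟩
    obtain ⟨i, hi, j, hj, hne, heq⟩ := hinf.exists_ne_map_eq_of_mapsTo
      (f := v) (t := (Vs : Set V)) (fun x _ => hv x) Vs.finite_toSet
    wlog hij : i < j generalizing i j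
    · exact this j hj i hi hne.symm heq.symm (by omega)
    have := hi.1
    exact hcyc p hpo i j hij heq (fun l h1 h2 => hx0 l (by omega)) ⟨i, le_rfl, hij, hi.2⟩
  have hnr : ∀ x, x0 ≤ x → ¬ rs x := by
    intro x hx hr
    have h1 := hx0 x hx
    have h2 : cx x = Top M := by simp only [hcx, colf, if_pos hr]
    obtain ⟨y, -, h3⟩ := hio 0
    have h4 := hbd y
    have : p = Top M := by simp only [hcx] at *; omega
    rw [this] at hpe
    exact Nat.not_even_iff_odd.2 hTopodd hpe
  have hcol : ∀ x, x0 ≤ x → cx x = max (max (s x).2.1 (s x).2.2.1)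
      (if (s x).2.2.2 = true then o x else 0) := fun x hx => by
    simp only [hcx, colf, if_neg (hnr x hx)]
  have hup : ∀ x, x0 ≤ x → o (x+1) = max (if o x < (s x).2.1 then 0 else o x) (s x).2.2.1 :=
    fun x hx => by rw [hstep, if_neg (hnr x hx)]; rfl
  -- bound at all late positions
  have main : ∀ m, x0 * d < m → M.Cor M.qI w m ≤ (((Nv + 2) * d : ℕ) : ℕ∞) := by
    intro m hm
    by_cases hmo : Even (cl M w m)
    · unfold PACost.Cor
      rw [if_pos (show Even (M.Ω (M.stateAt M.qI w m)) from hmo)]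
      exact bot_le
    rw [Nat.not_even_iff_odd] at hmo
    obtain ⟨x, hx, hxm, hmx⟩ := cover (fun x => x * d)
      (fun i => Nat.mul_lt_mul_of_pos_right (Nat.lt_succ_self i) hd) m x0 hm
    have hxd : (x+1) * d = x * d + d := by ring
    rcases (spec x).o_ub m hxm hmx hmo with hle | ⟨j', h1, h2, h3, h4⟩
    swap
    · refine cor_le M w m j' _ h1 h3 h4 ((segCost_le M w _ _ _).trans ?_)
      calc j' - m ≤ 1 * d := by omega
        _ ≤ (Nv + 2) * d := Nat.mul_le_mul_right d (by omega)
    set c := cl M w m with hc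
    have hc0 : 0 < c := hmo.pos
    have hcp : c ≤ p := by
      have h1 := hcol x hx
      have h2 := hx0 x hx
      omega
    have hcp' : c < p := by
      refine lt_of_le_of_ne hcp ?_
      intro h; rw [h] at hmo
      exact Nat.not_even_iff_odd.2 hmo hpe
    -- an answering block
    have hyex : ∃ y, x < y ∧ c < (s y).2.1 := by
      obtain ⟨y, h1, h2⟩ := hio (x+1)
      refine ⟨y, by omega, ?_⟩
      have h3 := hcol y (by omega)
      have h4 : (s y).2.2.1 ≠ p := by
        intro h
        have := ((spec y).o_att (by omega)).1
        rw [h] at this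
        exact Nat.not_even_iff_odd.2 this hpe
      have h5 : o y ≠ p := by
        intro h
        have := hodd y (by omega)
        rw [h] at this
        exact Nat.not_even_iff_odd.2 this hpe
      split_ifs at h3 <;> omega
    obtain ⟨y, ⟨hxy, hcy⟩, hymin⟩ : ∃ y, (x < y ∧ c < (s y).2.1) ∧
        ∀ l, l < y → ¬ (x < l ∧ c < (s l).2.1) :=
      ⟨Nat.find hyex, Nat.find_spec hyex, fun l hl => Nat.find_min hyex hl⟩
    have hel : ∀ l, x < l → l < y → (s l).2.1 ≤ c := fun l h1 h2 => by
      have := hymin l h2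
      by_contra hcon
      exact this ⟨h1, by omega⟩
    have hopen : ∀ k, x + 1 + k ≤ y → c ≤ o (x+1+k) := by
      intro k
      induction k with
      | zero =>
        intro _
        have := hup x hx
        rw [add_zero]
        omega
      | succ k ih =>
        intro hk
        have h1 := ih (by omega)
        have h2 := hup (x+1+k) (by omega)
        have h3 := hel (x+1+k) (by omega) (by omega)
        rw [if_neg (by omega)] at h2
        rw [← add_assoc, h2]
        omega
    have hopen' : ∀ l, x < l → l ≤ y → c ≤ o l := fun l h1 h2 => by
      have := hopen (l - (x+1)) (by omega)
      rwa [show x + 1 + (l - (x+1)) = l by omega] at this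
    -- few increment blocks in between
    set Fl := (Finset.Ioo x y).filter (fun l => (s l).2.2.2 = true) with hFl
    have hFlcard : Fl.card ≤ Nv := by
      refine le_trans ?_ hVs
      apply Finset.card_le_card_of_injOn v (fun l _ => hv l)
      intro i hi j hj heq
      by_contra hne
      wlog hij : i < j generalizing i j
      · exact this hj hi heq.symm (Ne.symm hne) (by omega)
      simp only [hFl, Finset.coe_filter, Finset.mem_Ioo, Set.mem_setOf_eq] at hi hj
      -- the maximal color on the cycle
      obtain ⟨l, hl, hlmax⟩ := Finset.exists_max_image (Finset.Ico i j) cx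
        ⟨i, Finset.mem_Ico.2 ⟨le_rfl, hij⟩⟩
      rw [Finset.mem_Ico] at hl
      have h1 : c ≤ cx l := by
        have a1 := hlmax i (Finset.mem_Ico.2 ⟨le_rfl, hij⟩)
        have a2 := hcol i (by omega)
        rw [if_pos hi.2] at a2
        have a3 := hopen' i (by omega) (by omega)
        omega
      have hlodd : Odd (cx l) := by
        have a2 := hcol l (by omega)
        have a3 := hel l (by omega) (by omega)
        have a4 : (s l).2.1 ≠ c := by
          intro h
          have := (spec l).e_even
          rw [h] at this
          exact Nat.not_even_iff_odd.2 hmo this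
        have a5 : cx l = (s l).2.2.1 ∨ cx l = o l := by
          split_ifs at a2 <;> omega
        rcases a5 with a5 | a5
        · rw [a5]; exact ((spec l).o_att (by omega)).1
        · rw [a5]; exact hodd l (by omega)
      exact hcyc _ hlodd i j hij heq
        (fun l' b1 b2 => hlmax l' (Finset.mem_Ico.2 ⟨b1, b2⟩)) ⟨l, hl.1, hl.2, rfl⟩
    -- the answer
    obtain ⟨n', n1, n2, n3⟩ := (spec y).e_att (by omega)
    have hxyd : (x+1) * d ≤ y * d := Nat.mul_le_mul_right d (by omega)
    have hyd : (y+1) * d = y * d + d := by ring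
    refine cor_le M w m n' _ (by omega) (by rw [n3]; exact (spec y).e_even) (by rw [n3]; exact hcy) ?_
    have hmid : ∀ k, x + 1 + k ≤ y → M.segCost M.qI w ((x+1)*d) ((x+1+k)*d) ≤
        ((Finset.Ioo x (x+1+k)).filter (fun l => (s l).2.2.2 = true)).card * d := by
      intro k
      induction k with
      | zero =>
        intro _
        have := segCost_le M w M.qI ((x+1)*d) ((x+1+0)*d)
        rw [add_zero] at this ⊢
        omega
      | succ k ih =>
        intro hk
        have h1 := ih (by omega)
        have e0 : (x + 1 + (k+1)) * d = (x+1+k) * d + d := by ring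
        have e1 := segCost_add M w M.qI ((x+1)*d) ((x+1+k)*d) ((x+1+(k+1))*d)
          (Nat.mul_le_mul_right d (by omega)) (by omega)
        have e2 : Finset.Ioo x (x+1+(k+1)) = insert (x+1+k) (Finset.Ioo x (x+1+k)) := by
          ext l; simp only [Finset.mem_Ioo, Finset.mem_insert]; omega
        rw [e1, e2, Finset.filter_insert]
        split_ifs with hfl
        · rw [Finset.card_insert_of_notMem (by simp)]
          have := segCost_le M w M.qI ((x+1+k)*d) ((x+1+(k+1))*d)
          set Z := (Finset.filter (fun l => (s l).2.2.2 = true) (Finset.Ioo x (x+1+k))).card with hZ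
          have h7 : (Z + 1) * d = Z * d + d := by ring
          omega
        · have : M.segCost M.qI w ((x+1+k)*d) ((x+1+(k+1))*d) = 0 := by
            apply segCost_zero
            intro hcon
            exact hfl ((spec (x+1+k)).flag.2 hcon)
          omega
    have h1 := hmid (y - (x+1)) (by omega)
    rw [show x + 1 + (y - (x+1)) = y by omega] at h1
    have h2 : Fl.card * d ≤ Nv * d := Nat.mul_le_mul_right d hFlcard
    have h3 := h1.trans h2
    have h7 : (Nv + 2) * d = Nv * d + 2 * d := by ring
    have e1 := segCost_add M w M.qI m ((x+1)*d) n' hmx (by omega)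
    have e2 := segCost_add M w M.qI ((x+1)*d) (y*d) n' hxyd (by omega)
    have e3 := segCost_le M w M.qI m ((x+1)*d)
    have e4 := segCost_le M w M.qI (y*d) n'
    omega
  refine Filter.limsup_le_of_le (by isBoundedDefault) ?_
  exact Filter.eventually_atTop.2 ⟨x0 * d + 1, fun m hm => main m (by omega)⟩

end Final

section Strat
variable {Q I O : Type} [Fintype Q] (M : PACost Q (I × O)) (f : ℕ → ℕ) (σ : List I → O)

def nxt (t : Nd I) : Q × ℕ :=
  ((blkS M f σ t).1, if rst M f σ t then 0 else updo t.o (blkS M f σ t))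

variable (sel : Vx Q → {t : Nd I // Valid M f σ t})

def cur (bw : ℕ → List I) : ℕ → Q × ℕ
  | 0 => (M.qI, 0)
  | x + 1 => nxt M f σ (sel ((cur bw x).1, (cur bw x).2, ty M (bw x), ty M (bw (x+1)))).1

def vv (bw : ℕ → List I) (x : ℕ) : Vx Q :=
  ((cur M f σ sel bw x).1, (cur M f σ sel bw x).2, ty M (bw x), ty M (bw (x+1)))

theorem cur_succ (bw : ℕ → List I) (x : ℕ) :
    cur M f σ sel bw (x+1) = nxt M f σ (sel (vv M f σ sel bw x)).1 := rfl

def zz (bw : ℕ → List I) (x : ℕ) : List (I × O) :=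
  if h : ∃ z : List (I × O), z.map Prod.fst = bw x ∧
      summ M (cur M f σ sel bw x).1 z = blkS M f σ (sel (vv M f σ sel bw x)).1
  then Classical.choose h else []

theorem cur_congr (bw bw' : ℕ → List I) (x : ℕ) (h : ∀ y, y ≤ x → bw y = bw' y) :
    cur M f σ sel bw x = cur M f σ sel bw' x := by
  induction x with
  | zero => rfl
  | succ x ih =>
    rw [cur_succ, cur_succ, vv, vv, ih (fun y hy => h y (by omega)), h x (by omega),
      h (x+1) le_rfl]

theorem zz_congr (bw bw' : ℕ → List I) (x : ℕ) (h : ∀ y, y ≤ x + 1 → bw y = bw' y) :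
    zz M f σ sel bw x = zz M f σ sel bw' x := by
  have h1 := cur_congr M f σ sel bw bw' x (fun y hy => h y (by omega))
  have h2 : vv M f σ sel bw x = vv M f σ sel bw' x := by
    rw [vv, vv, h1, h x (by omega), h (x+1) le_rfl]
  have h3 := h x (by omega)
  unfold zz
  simp only [h1, h2, h3]

def blks (d : ℕ) (α : ℕ → I) (x : ℕ) : List I := seg α (x*d) ((x+1)*d)

def strat [Inhabited I] (d : ℕ) (h : List I) : O :=
  ((zz M f σ sel (blks d (fun j => h.getD j default)) ((h.length - 2*d) / d)).getD
    ((h.length - 2*d) % d) (default, σ [])).2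

theorem strat_pre [Inhabited I] (d : ℕ) (hd : 0 < d) (α : ℕ → I) (x j : ℕ) (hj : j < d) :
    strat M f σ sel d (pre α (2*d + (x*d + j))) =
      ((zz M f σ sel (blks d α) x).getD j (default, σ [])).2 := by
  have hlen : (pre α (2*d + (x*d + j))).length = 2*d + (x*d+j) := by simp [pre]
  have h1 : (x*d + j) / d = x := by
    rw [mul_comm, Nat.mul_add_div hd, Nat.div_eq_of_lt hj, add_zero]
  have h2 : (x*d + j) % d = j := by
    rw [mul_comm, Nat.mul_add_mod, Nat.mod_eq_of_lt hj]
  unfold strat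
  rw [hlen, Nat.add_sub_cancel_left, h1, h2]
  rw [zz_congr M f σ sel _ (blks d α) x]
  intro y hy
  apply seg_congr
  intro l _ hl
  have h3 : (y+1) * d ≤ (x+2) * d := Nat.mul_le_mul_right d (by omega)
  have h4 : (x+2)*d = x*d + 2*d := by ring
  have : l < 2*d + (x*d+j) := by omega
  simp [pre, this]

theorem strat_bound [Inhabited I] (hf : DelayFn f) (d Nv : ℕ) (hd : 2 ^ (bigS M).card ≤ d)
    (hNv : (Finset.univ ×ˢ (Cs M ×ˢ ((bigS M).powerset ×ˢ (bigS M).powerset)) :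
      Finset (Vx Q)).card ≤ Nv)
    (hsel : ∀ v, ∀ t : {t : Nd I // Valid M f σ t}, vert M f σ t.1 = v →
      vert M f σ (sel v).1 = v)
    (hcyc : ∀ x : ℕ → Vx Q, (∀ i, ∃ t : {t : Nd I // Valid M f σ t}, vert M f σ t.1 = x i) →
      (∀ i, ∃ t' : {t : Nd I // Valid M f σ t},
        Rn M f σ (sel (x i)).1 t'.1 ∧ vert M f σ t'.1 = x (i+1)) →
      ∀ p, Odd p → ∀ i j, i < j → x i = x j →
        (∀ l, i ≤ l → l < j → colr M f σ (sel (x l)).1 ≤ p) →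
        ¬ ∃ l, i ≤ l ∧ l < j ∧ colr M f σ (sel (x l)).1 = p)
    (α : ℕ → I) (w : ℕ → I × O)
    (hw : ∀ j, w j = (α j, strat M f σ sel d (pre α (2*d + j)))) :
    M.wCost w ≤ (((Nv + 2) * d : ℕ) : ℕ∞) := by
  have hd0 : 0 < d := lt_of_lt_of_le (by positivity) hd
  have hmul : ∀ x, (x+1)*d = x*d + d := fun x => by ring
  set bw := blks d α with hbw
  have hinf : ∀ x, InfC M (ty M (bw x)) := fun x => by
    apply infC_of_length
    rw [hbw, blks, seg_length, hmul]
    omega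
  have hchild0 : ∀ x, (∃ t : {t : Nd I // Valid M f σ t}, vert M f σ t.1 = vv M f σ sel bw x) →
      ∃ t' : {t : Nd I // Valid M f σ t}, Rn M f σ (sel (vv M f σ sel bw x)).1 t'.1 ∧
        vert M f σ t'.1 = vv M f σ sel bw (x+1) := by
    rintro x ⟨t, ht⟩
    have h1 := hsel _ t ht
    obtain ⟨t', a1, a2, a3⟩ := child M f σ hf _ (sel (vv M f σ sel bw x)).2 _ (hinf (x+2))
    refine ⟨⟨t', a1⟩, a2, ?_⟩
    rw [a3]
    have h2 : ty M (seg (sel (vv M f σ sel bw x)).1.α (sel (vv M f σ sel bw x)).1.b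
      (sel (vv M f σ sel bw x)).1.c) = ty M (bw (x+1)) := congrArg (fun v => v.2.2.2) h1
    rw [h2]
    rfl
  have hvx : ∀ x, ∃ t : {t : Nd I // Valid M f σ t}, vert M f σ t.1 = vv M f σ sel bw x := by
    intro x
    induction x with
    | zero =>
      obtain ⟨t, a1, a2⟩ := init_node M f σ _ _ (hinf 0) (hinf 1)
      exact ⟨⟨t, a1⟩, a2⟩
    | succ x ih =>
      obtain ⟨t', -, a2⟩ := hchild0 x ih
      exact ⟨t', a2⟩
  have hsv : ∀ x, vert M f σ (sel (vv M f σ sel bw x)).1 = vv M f σ sel bw x := fun x => by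
    obtain ⟨t, ht⟩ := hvx x
    exact hsel _ t ht
  have ho : ∀ x, (sel (vv M f σ sel bw x)).1.o = (cur M f σ sel bw x).2 := fun x =>
    congrArg (fun v => v.2.1) (hsv x)
  have hz : ∀ x, (zz M f σ sel bw x).map Prod.fst = bw x ∧
      summ M (cur M f σ sel bw x).1 (zz M f σ sel bw x) =
        blkS M f σ (sel (vv M f σ sel bw x)).1 := by
    intro x
    have hex : ∃ z : List (I × O), z.map Prod.fst = bw x ∧
      summ M (cur M f σ sel bw x).1 z = blkS M f σ (sel (vv M f σ sel bw x)).1 := by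
      rw [← mem_ty]
      have h1 := bsum_mem_ty M (out f σ (sel (vv M f σ sel bw x)).1.α)
        (sel (vv M f σ sel bw x)).1.a (sel (vv M f σ sel bw x)).1.b
      have h2 : M.stateAt M.qI (out f σ (sel (vv M f σ sel bw x)).1.α)
        (sel (vv M f σ sel bw x)).1.a = (cur M f σ sel bw x).1 :=
        congrArg (fun v => v.1) (hsv x)
      have h3 : ty M (seg (sel (vv M f σ sel bw x)).1.α (sel (vv M f σ sel bw x)).1.a
        (sel (vv M f σ sel bw x)).1.b) = ty M (bw x) := congrArg (fun v => v.2.2.1) (hsv x)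
      rw [h2] at h1
      rw [← h3]
      exact h1
    unfold zz
    rw [dif_pos hex]
    exact Classical.choose_spec hex
  have hlen : ∀ x, (zz M f σ sel bw x).length = d := fun x => by
    have := congrArg List.length (hz x).1
    rw [List.length_map, hbw, blks, seg_length, hmul, Nat.add_sub_cancel_left] at this
    exact this
  have hseg : ∀ x, seg w (x*d) ((x+1)*d) = zz M f σ sel bw x := by
    intro x
    apply List.ext_getElem
    · rw [seg_length, hlen, hmul]; omega
    · intro j h1 h2
      have hj : j < d := by rw [hlen] at h2; exact h2
      have e1 : (seg w (x*d) ((x+1)*d))[j] = w (x*d + j) := by simp [seg]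
      rw [e1, hw, strat_pre M f σ sel d hd0 α x j hj, List.getD_eq_getElem _ _ h2]
      apply Prod.ext
      · have h3 : ((zz M f σ sel bw x).map Prod.fst)[j]'(by simpa using h2) =
          (seg α (x*d) ((x+1)*d))[j]'(by rw [seg_length, hmul]; omega) := by
          congr 1
          exact (hz x).1
        rw [List.getElem_map] at h3
        simp only
        rw [h3]
        simp [seg]
      · rfl
  have hst : ∀ x, M.stateAt M.qI w (x*d) = (cur M f σ sel bw x).1 := by
    intro x
    induction x with
    | zero => simp [PACost.stateAt, cur]
    | succ x ih =>
      rw [← (bsum_spec M w (x*d) ((x+1)*d) (by rw [hmul]; omega)).st, bsum, ih, hseg, (hz x).2]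
      rfl
  refine final_bound M w d Nv hd0 (vv M f σ sel bw) _ hNv ?_ (fun x => (cur M f σ sel bw x).2)
    (fun x => rst M f σ (sel (vv M f σ sel bw x)).1)
    (fun x => blkS M f σ (sel (vv M f σ sel bw x)).1) ?_ ?_ ?_ ?_ ?_
  · intro x
    simp only [vv, Finset.mem_product, Finset.mem_univ, true_and]
    refine ⟨?_, Finset.mem_powerset.2 (Finset.filter_subset _ _),
      Finset.mem_powerset.2 (Finset.filter_subset _ _)⟩
    rw [← ho]
    exact (sel (vv M f σ sel bw x)).2.oCs
  · intro x
    rw [bsum, hst, hseg, (hz x).2]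
  · intro x
    rw [cur_succ, nxt]
    simp only [ho]
  · intro x
    rw [← ho]
    exact fun h => ((sel (vv M f σ sel bw x)).2.oinv h).1
  · intro x
    rw [← ho]
    exact (sel (vv M f σ sel bw x)).2.oCs
  · have h1 := hcyc (vv M f σ sel bw) hvx (fun x => hchild0 x (hvx x))
    simp only [colr, ho] at h1
    exact h1

theorem exists_strat [Inhabited I] (hf : DelayFn f) (hσ : OWinning f M.Lang σ) (d Nv : ℕ)
    (hd : 2 ^ (bigS M).card ≤ d)
    (hNv : (Finset.univ ×ˢ (Cs M ×ˢ ((bigS M).powerset ×ˢ (bigS M).powerset)) :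
      Finset (Vx Q)).card ≤ Nv) :
    ∃ τ : List I → O, ∀ (α : ℕ → I) (w : ℕ → I × O), (∀ j, w j = (α j, τ (pre α (2*d + j)))) →
      M.wCost w ≤ (((Nv + 2) * d : ℕ) : ℕ∞) := by
  have hC : InfC M (ty M (List.replicate (2 ^ (bigS M).card) (default : I))) :=
    infC_of_length M _ (by simp)
  obtain ⟨t0, ht0, -⟩ := init_node M f σ _ _ hC hC
  have : Nonempty {t : Nd I // Valid M f σ t} := ⟨⟨t0, ht0⟩⟩
  obtain ⟨sel, h1, h2⟩ := no_odd_cycle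
    (fun t t' : {t : Nd I // Valid M f σ t} => Rn M f σ t.1 t'.1) (fun t => colr M f σ t.1)
    (Top M) (fun t => colf_le M _ _ _ t.2.oCs (summ_mem M _ _)) (fun t => vert M f σ t.1)
    (fun t hR p hp hle hio => tree_parity M f σ hf hσ (fun i => (t i).1) (fun i => (t i).2) hR p hp
      hle hio)
  exact ⟨strat M f σ sel d, fun α w hw => strat_bound M f σ sel hf d Nv hd hNv h1 h2 α w hw⟩

end Strat

theorem arith_d (n k : ℕ) (hn : 2 ≤ n) :
    n * (n * ((k+1) * ((k+1) * 2))) ≤ 2 * n ^ 4 * k ^ 2 + 1 ∨ k = 0 := by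
  rcases Nat.eq_zero_or_pos k with h | h
  · exact Or.inr h
  left
  have h1 : k + 1 ≤ n * k := by nlinarith
  have h2 : (k+1) * (k+1) ≤ (n*k) * (n*k) := Nat.mul_le_mul h1 h1
  calc n * (n * ((k+1) * ((k+1) * 2))) = (2 * n * n) * ((k+1) * (k+1)) := by ring
    _ ≤ (2 * n * n) * ((n*k) * (n*k)) := Nat.mul_le_mul_left _ h2
    _ = 2 * n ^ 4 * k ^ 2 := by ring
    _ ≤ _ := Nat.le_succ _

theorem arith_cost (n k B : ℕ) (hn : 2 ≤ n) (hk : 2 ≤ k)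
    (hB : B ≤ n * (n * ((k+1) * ((k+1) * 2)))) :
    (n * ((k+1) * (2 ^ B * 2 ^ B)) + 2) * 2 ^ (2 * n ^ 4 * k ^ 2 + 1) ≤
      n ^ 3 * k ^ 2 * 2 ^ (2 * n ^ 7 * k ^ 4 + 3) := by
  have hk2 : k + 1 ≤ k ^ 2 := by nlinarith
  have hB' : B ≤ 2 * n ^ 2 * k ^ 4 := by
    have h2 : (k+1) * (k+1) ≤ k^2 * k^2 := Nat.mul_le_mul hk2 hk2
    calc B ≤ (2 * n * n) * ((k+1) * (k+1)) := by rw [show (2 * n * n) * ((k+1) * (k+1)) =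
            n * (n * ((k+1) * ((k+1) * 2))) by ring]; exact hB
      _ ≤ (2 * n * n) * (k^2 * k^2) := Nat.mul_le_mul_left _ h2
      _ = 2 * n ^ 2 * k ^ 4 := by ring
  have hn2 : 4 ≤ n ^ 2 := by nlinarith
  have hn3 : 8 ≤ n ^ 3 := by
    calc 8 = 2 ^ 3 := by norm_num
      _ ≤ n ^ 3 := Nat.pow_le_pow_left hn 3
  have hn5 : 32 ≤ n ^ 5 := by
    calc 32 = 2 ^ 5 := by norm_num
      _ ≤ n ^ 5 := Nat.pow_le_pow_left hn 5
  have hkk : 4 ≤ k ^ 2 := by nlinarith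
  have hexp : B + B + (2 * n ^ 4 * k ^ 2 + 1) ≤ 2 * n ^ 7 * k ^ 4 + 1 := by
    have e1 : 32 * (n^2 * k^4) ≤ n^7 * k^4 := by
      calc 32 * (n^2 * k^4) ≤ n^5 * (n^2 * k^4) := Nat.mul_le_mul_right _ hn5
        _ = n^7 * k^4 := by ring
    have e2 : 32 * (n^4 * k^2) ≤ n^7 * k^4 := by
      calc 32 * (n^4 * k^2) = (8 * 4) * (n^4 * k^2) := by ring
        _ ≤ (n^3 * k^2) * (n^4 * k^2) := Nat.mul_le_mul_right _ (Nat.mul_le_mul hn3 hkk)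
        _ = n^7 * k^4 := by ring
    have e3 : 2 * n ^ 4 * k ^ 2 = 2 * (n^4 * k^2) := by ring
    have e4 : 2 * n ^ 7 * k ^ 4 = 2 * (n^7 * k^4) := by ring
    have e5 : 2 * n ^ 2 * k ^ 4 = 2 * (n^2 * k^4) := by ring
    omega
  have hP : 1 ≤ 2 ^ B * 2 ^ B := Nat.one_le_iff_ne_zero.2 (by positivity)
  have hc : n * (k+1) + 2 ≤ 4 * (n^3 * k^2) := by
    have : n * (k+1) ≤ n^3 * k^2 :=
      Nat.mul_le_mul (by calc n = n^1 := (pow_one n).symm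
                          _ ≤ n^3 := Nat.pow_le_pow_right (by omega) (by omega)) hk2
    have h2 : 8 * 4 ≤ n^3 * k^2 := Nat.mul_le_mul hn3 hkk
    omega
  calc (n * ((k+1) * (2 ^ B * 2 ^ B)) + 2) * 2 ^ (2 * n ^ 4 * k ^ 2 + 1)
      ≤ ((n * (k+1) + 2) * (2 ^ B * 2 ^ B)) * 2 ^ (2 * n ^ 4 * k ^ 2 + 1) := by
        apply Nat.mul_le_mul_right
        nlinarith
    _ = (n * (k+1) + 2) * 2 ^ (B + B + (2 * n ^ 4 * k ^ 2 + 1)) := by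
        rw [pow_add, pow_add]; ring
    _ ≤ (4 * (n^3 * k^2)) * 2 ^ (2 * n ^ 7 * k ^ 4 + 1) :=
        Nat.mul_le_mul hc (Nat.pow_le_pow_right (by omega) hexp)
    _ = n ^ 3 * k ^ 2 * 2 ^ (2 * n ^ 7 * k ^ 4 + 3) := by
        rw [pow_add, pow_add]; ring

end DG

/-- Corollary 3, lookahead and cost bounds. If Player O wins `Γ_f(L(A))`
for some delay function, then she wins for the constant delay function with
`f 0 = 2^(2n⁴k²+2)` with a winning strategy of cost at most `n³k²·2^(2n⁷k⁴+3)`. -/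
theorem statement9 {Q I O : Type} [Fintype Q] [Fintype I] [Fintype O] [Inhabited I]
    (M : PACost Q (I × O)) (n k : ℕ)
    (hn : Fintype.card Q = n) (hk : (Finset.univ.image M.Ω).card = k)
    (he : ∃ q, Even (M.Ω q)) (ho : ∃ q, Odd (M.Ω q))
    (h : ∃ f : ℕ → ℕ, DelayFn f ∧ OWins f M.Lang) :
    ∃ τO : List I → O,
      OWinning (fun i => if i = 0 then 2 ^ (2 * n ^ 4 * k ^ 2 + 2) else 1) M.Lang τO ∧
      stratCost M.wCost (fun i => if i = 0 then 2 ^ (2 * n ^ 4 * k ^ 2 + 2) else 1) τO ≤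
        ((n ^ 3 * k ^ 2 * 2 ^ (2 * n ^ 7 * k ^ 4 + 3) : ℕ) : ℕ∞) := by
  obtain ⟨f, hf, σ, hσ⟩ := h
  obtain ⟨q0, hq0⟩ := he
  obtain ⟨q1, hq1⟩ := ho
  have hne : M.Ω q0 ≠ M.Ω q1 := fun h => by
    rw [h] at hq0; exact Nat.not_even_iff_odd.2 hq1 hq0
  have hn2 : 2 ≤ n := by
    rw [← hn]
    exact Fintype.one_lt_card_iff.2 ⟨q0, q1, fun h => hne (by rw [h])⟩
  have hk2 : 2 ≤ k := by
    rw [← hk]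
    exact Finset.one_lt_card.2 ⟨_, Finset.mem_image_of_mem _ (Finset.mem_univ q0), _,
      Finset.mem_image_of_mem _ (Finset.mem_univ q1), hne⟩
  have hCs : (DG.Cs M).card ≤ k + 1 := by
    rw [DG.Cs]
    refine (Finset.card_insert_le _ _).trans ?_
    rw [← hk]
  have hB : (DG.bigS M).card ≤ n * (n * ((k+1) * ((k+1) * 2))) := by
    rw [DG.bigS, DG.Sset]
    simp only [Finset.card_product, Finset.card_univ, hn, Fintype.card_bool]
    gcongr
  have hd : 2 ^ (DG.bigS M).card ≤ 2 ^ (2 * n ^ 4 * k ^ 2 + 1) := by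
    apply Nat.pow_le_pow_right (by omega)
    rcases DG.arith_d n k hn2 with h | h
    · exact hB.trans h
    · omega
  obtain ⟨τ, hτ⟩ := DG.exists_strat M f σ hf hσ (2 ^ (2 * n ^ 4 * k ^ 2 + 1))
    (n * ((k+1) * (2 ^ (DG.bigS M).card * 2 ^ (DG.bigS M).card))) hd (by
      simp only [Finset.card_product, Finset.card_univ, hn, Finset.card_powerset]
      gcongr)
  have hbound : ∀ (u : ℕ → List I) (v : ℕ → O),
      (∀ i, (u i).length = if i = 0 then 2 ^ (2 * n ^ 4 * k ^ 2 + 2) else 1) →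
      (∀ i, v i = τ (oHist u i)) →
      M.wCost (fun n => (flatWord u n, v n)) ≤
        ((n ^ 3 * k ^ 2 * 2 ^ (2 * n ^ 7 * k ^ 4 + 3) : ℕ) : ℕ∞) := by
    intro u v hu hv
    refine (hτ (flatWord u) _ ?_).trans ?_
    · intro j
      rw [hv, DG.oHist_eq (fun i => if i = 0 then 2 ^ (2 * n ^ 4 * k ^ 2 + 2) else 1) ?_ u hu j]
      · have hFs : DG.Fs (fun i => if i = 0 then 2 ^ (2 * n ^ 4 * k ^ 2 + 2) else 1) (j+1) =
            2 * 2 ^ (2 * n ^ 4 * k ^ 2 + 1) + j := by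
          induction j with
          | zero => simp [DG.Fs]; ring
          | succ j ih => rw [DG.Fs_succ, ih, if_neg (by omega)]; ring
        rw [hFs]
      · intro i
        simp only
        split_ifs <;> positivity
    · exact_mod_cast DG.arith_cost n k _ hn2 hk2 hB
  refine ⟨τ, ?_, ?_⟩
  · intro u v hu hv
    exact lt_of_le_of_lt (hbound u v hu hv) (ENat.natCast_lt_top _)
  · exact iSup_le fun u => iSup_le fun v => iSup_le fun h => hbound u v h.1 h.2
end
end

section
/- Let L be recognized by a Streett automaton with costs A over Σ_I × Σ_O with n states and k Streett pairs, and let f be the constant delay function with f(0) = 2^{n⁴·2^{3k}+1}. Then the following are equivalent: (1) Player I wins Γ_f(L(A)); (2) Player I wins Γ_{f'}(L(A)) for every delay function f'. -/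
attribute [local instance] Classical.propDecidable

noncomputable section

/-- A Streett automaton with costs: states `Q`, alphabet `A`, index set `J` of Streett pairs
`(req j, res j)`, and one cost function `Cst j` per pair (`true` = increment). -/
structure StreettCost (Q A J : Type) where
  qI : Q
  δ : Q → A → Q
  req : J → Set Q
  res : J → Set Q
  Cst : J → Q → A → Bool

namespace StreettCost

variable {Q A J : Type}

/-- The state reached after processing the first `n` letters of `w` starting in `q0`. -/
def stateAt (M : StreettCost Q A J) (q0 : Q) (w : ℕ → A) : ℕ → Q
  | 0 => q0
  | n + 1 => M.δ (stateAt M q0 w n) (w n)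

/-- The number of `Cst j`-increment-transitions between positions `m` and `n`. -/
def segCost (M : StreettCost Q A J) (j : J) (q0 : Q) (w : ℕ → A) (m n : ℕ) : ℕ :=
  ((Finset.Ico m n).filter fun i => M.Cst j (stateAt M q0 w i) (w i) = true).card

/-- The cost-of-response of pair `j` at position `n`. -/
def StCorJ (M : StreettCost Q A J) (j : J) (q0 : Q) (w : ℕ → A) (n : ℕ) : ℕ∞ :=
  if stateAt M q0 w n ∈ M.req j then
    sInf { c : ℕ∞ | ∃ n', n ≤ n' ∧ stateAt M q0 w n' ∈ M.res j ∧
      c = (segCost M j q0 w n n' : ℕ∞) }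
  else 0

/-- The aggregated cost-of-response at position `n`. -/
def StCor (M : StreettCost Q A J) (q0 : Q) (w : ℕ → A) (n : ℕ) : ℕ∞ :=
  ⨆ j : J, StCorJ M j q0 w n

/-- The run of `M` on `w` starting in `q0` satisfies the Streett condition with costs. -/
def Accepting (M : StreettCost Q A J) (q0 : Q) (w : ℕ → A) : Prop :=
  Filter.limsup (fun n => StCor M q0 w n) Filter.atTop < ⊤

/-- The language of `M`. -/
def Lang (M : StreettCost Q A J) : Set (ℕ → A) := { w | Accepting M M.qI w }

end StreettCost

section Helpers

open Finset

namespace StreettCost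

variable {Q A J I O : Type}

theorem accepting_iff [Fintype J] (M : StreettCost Q A J) (q0 : Q) (w : ℕ → A) :
    M.Accepting q0 w ↔ ∃ B N : ℕ, ∀ m, N ≤ m → ∀ j, M.stateAt q0 w m ∈ M.req j →
      ∃ n', m ≤ n' ∧ M.stateAt q0 w n' ∈ M.res j ∧ M.segCost j q0 w m n' ≤ B := by
  constructor
  · intro h
    unfold Accepting at h
    obtain ⟨b, hb⟩ := ENat.ne_top_iff_exists.mp h.ne
    have h2 : Filter.limsup (fun n => StCor M q0 w n) Filter.atTop < ((b + 1 : ℕ) : ℕ∞) := by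
      rw [← hb]; exact_mod_cast Nat.lt_succ_self b
    have h3 := Filter.eventually_lt_of_limsup_lt h2
    obtain ⟨N, hN⟩ := Filter.eventually_atTop.mp h3
    refine ⟨b + 1, N, fun m hm j hj => ?_⟩
    have h4 : StCorJ M j q0 w m < ((b + 1 : ℕ) : ℕ∞) :=
      lt_of_le_of_lt (le_iSup (fun j => StCorJ M j q0 w m) j) (hN m hm)
    unfold StCorJ at h4
    rw [if_pos hj, sInf_lt_iff] at h4
    obtain ⟨c, ⟨n', h5, h6, rfl⟩, h7⟩ := h4
    exact ⟨n', h5, h6, le_of_lt (by exact_mod_cast h7)⟩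
  · rintro ⟨B, N, h⟩
    unfold Accepting
    refine lt_of_le_of_lt (b := (B : ℕ∞)) ?_ (ENat.natCast_lt_top B)
    refine Filter.limsup_le_of_le (by isBoundedDefault) ?_
    refine Filter.eventually_atTop.mpr ⟨N, fun m hm => iSup_le fun j => ?_⟩
    unfold StCorJ
    split_ifs with hj
    · obtain ⟨n', h5, h6, h7⟩ := h m hm j hj
      refine le_trans (b := ((segCost M j q0 w m n' : ℕ) : ℕ∞)) (sInf_le ?_) (by exact_mod_cast h7)
      exact ⟨n', h5, h6, rfl⟩
    · exact bot_le

/-- Transfer of acceptance between blockwise matching words. -/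
theorem accepting_transfer [Fintype J] (M : StreettCost Q A J) (q0 : Q) (w w' : ℕ → A)
    (p : ℕ → ℕ) (hp : StrictMono p) (hp0 : p 0 = 0) (d : ℕ) (hd : 0 < d)
    (hA : ∀ r j, (∃ m, p r ≤ m ∧ m < p (r + 1) ∧ M.stateAt q0 w' m ∈ M.res j) →
      ∃ m, r * d ≤ m ∧ m < (r + 1) * d ∧ M.stateAt q0 w m ∈ M.res j)
    (hB : ∀ r j, (∃ m, r * d ≤ m ∧ m < (r + 1) * d ∧ M.stateAt q0 w m ∈ M.req j ∧
        ∀ m', m ≤ m' → m' < (r + 1) * d → M.stateAt q0 w m' ∉ M.res j) →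
      ∃ m, p r ≤ m ∧ m < p (r + 1) ∧ M.stateAt q0 w' m ∈ M.req j ∧
        ∀ m', m ≤ m' → m' < p (r + 1) → M.stateAt q0 w' m' ∉ M.res j)
    (hC : ∀ r j, (∃ m, r * d ≤ m ∧ m < (r + 1) * d ∧
        M.Cst j (M.stateAt q0 w m) (w m) = true) →
      ∃ m, p r ≤ m ∧ m < p (r + 1) ∧ M.Cst j (M.stateAt q0 w' m) (w' m) = true)
    (h : M.Accepting q0 w') : M.Accepting q0 w := by
  rw [accepting_iff] at h ⊢
  obtain ⟨B, N, h⟩ := h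
  refine ⟨(B + 2) * d, N * d, fun m hm j hj => ?_⟩
  obtain ⟨i, hi⟩ : ∃ i, i = m / d := ⟨_, rfl⟩
  have hi1 : i * d ≤ m := hi ▸ Nat.div_mul_le_self m d
  have hi2 : m < (i + 1) * d := by
    have := Nat.lt_div_mul_add (a := m) hd
    rw [hi, add_mul, one_mul]; exact this
  have hiN : N ≤ i := hi ▸ (Nat.le_div_iff_mul_le hd).mpr hm
  by_cases hin : ∃ m', m ≤ m' ∧ m' < (i + 1) * d ∧ M.stateAt q0 w m' ∈ M.res j
  · obtain ⟨m', h1, h2, h3⟩ := hin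
    refine ⟨m', h1, h3, ?_⟩
    unfold segCost
    refine (card_filter_le _ _).trans ?_
    rw [Nat.card_Ico]
    have : (i + 1) * d = i * d + d := by ring
    have : (B + 2) * d = B * d + 2 * d := by ring
    omega
  · push Not at hin
    obtain ⟨m', a1, a2, a3, a4⟩ := hB i j ⟨m, hi1, hi2, hj, hin⟩
    have hm'N : N ≤ m' := hiN.trans ((hp.le_apply (x := i)).trans a1)
    obtain ⟨n', b1, b2, b3⟩ := h m' hm'N j a3
    have hn' : p (i + 1) ≤ n' := by
      by_contra hcon
      exact a4 n' b1 (not_le.mp hcon) b2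
    obtain ⟨l, hl1, hl2⟩ : ∃ l, p l ≤ n' ∧ n' < p (l + 1) := by
      have hex : ∃ l, n' < p (l + 1) := ⟨n', lt_of_lt_of_le (Nat.lt_succ_self n') (hp.le_apply)⟩
      refine ⟨Nat.find hex, ?_, Nat.find_spec hex⟩
      rcases hz : Nat.find hex with _ | z
      · rw [hp0]; exact Nat.zero_le _
      · have := Nat.find_min hex (m := z) (by omega)
        omega
    have hil : i < l := by
      have : p (i + 1) < p (l + 1) := by omega
      have := hp.lt_iff_lt.mp this
      omega
    obtain ⟨n, c1, c2, c3⟩ := hA l j ⟨n', hl1, hl2, b2⟩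
    have hmn : m ≤ n := by
      have : (i + 1) * d ≤ l * d := Nat.mul_le_mul_right d hil
      omega
    refine ⟨n, hmn, c3, ?_⟩
    let R : Finset ℕ := (Finset.Ioo i l).filter fun r =>
      ∃ m, r * d ≤ m ∧ m < (r + 1) * d ∧ M.Cst j (M.stateAt q0 w m) (w m) = true
    have hR : R.card ≤ B := by
      refine le_trans ?_ b3
      have hsel : ∀ r, ∃ t, r ∈ R →
          (p r ≤ t ∧ t < p (r + 1) ∧ M.Cst j (M.stateAt q0 w' t) (w' t) = true) := by
        intro r
        by_cases hr : r ∈ R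
        · obtain ⟨t, ht⟩ := hC r j (Finset.mem_filter.mp hr).2
          exact ⟨t, fun _ => ht⟩
        · exact ⟨0, fun h => absurd h hr⟩
      choose g hg using hsel
      unfold segCost
      refine Finset.card_le_card_of_injOn g ?_ ?_
      · intro r hr
        have hr' : r ∈ R := hr
        obtain ⟨g1, g2, g3⟩ := hg r hr'
        have hr2 := Finset.mem_Ioo.mp (Finset.mem_filter.mp hr').1
        have e1 : p (i + 1) ≤ p r := hp.monotone hr2.1
        have e2 : p (r + 1) ≤ p l := hp.monotone hr2.2
        simp only [Finset.coe_filter, Finset.mem_Ico, Set.mem_ofPred_eq]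
        exact ⟨⟨by omega, by omega⟩, g3⟩
      · intro r hr r' hr' heq
        obtain ⟨g1, g2, g3⟩ := hg r hr
        obtain ⟨g1', g2', g3'⟩ := hg r' hr'
        have e1 : r < r' + 1 := hp.lt_iff_lt.mp (by omega)
        have e2 : r' < r + 1 := hp.lt_iff_lt.mp (by omega)
        omega
    have hsub : ((Finset.Ico m n).filter fun t => M.Cst j (M.stateAt q0 w t) (w t) = true) ⊆
        (insert i (insert l R)).biUnion fun r => Finset.Ico (r * d) ((r + 1) * d) := by
      intro t ht
      obtain ⟨ht1, ht2⟩ := Finset.mem_filter.mp ht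
      obtain ⟨ht3, ht4⟩ := Finset.mem_Ico.mp ht1
      have f1 : t / d * d ≤ t := Nat.div_mul_le_self t d
      have f2 : t < (t / d + 1) * d := by
        have := Nat.lt_div_mul_add (a := t) hd
        rw [add_mul, one_mul]; exact this
      rw [Finset.mem_biUnion]
      refine ⟨t / d, ?_, Finset.mem_Ico.mpr ⟨f1, f2⟩⟩
      have f3 : i ≤ t / d := (Nat.le_div_iff_mul_le hd).mpr (by omega)
      have f4 : t / d < l + 1 := (Nat.div_lt_iff_lt_mul hd).mpr (by omega)
      rw [Finset.mem_insert, Finset.mem_insert]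
      by_cases k1 : t / d = i
      · exact Or.inl k1
      by_cases k2 : t / d = l
      · exact Or.inr (Or.inl k2)
      refine Or.inr (Or.inr (Finset.mem_filter.mpr ⟨Finset.mem_Ioo.mpr ⟨by omega, by omega⟩, ?_⟩))
      exact ⟨t, f1, f2, ht2⟩
    unfold segCost
    refine (Finset.card_le_card hsub).trans ?_
    refine (Finset.card_biUnion_le_card_mul _ _ d ?_).trans ?_
    · intro r _
      rw [Nat.card_Ico, add_mul, one_mul]; omega
    · refine Nat.mul_le_mul_right d ?_
      have := Finset.card_insert_le i (insert l R)
      have := Finset.card_insert_le l R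
      omega

/-- Effects of finite words. -/
abbrev Eff (Q J : Type) := Q × (J → Prop × Prop × Prop)

/-- The effect of the first `n` letters of `w` from state `q`. -/
def eff (M : StreettCost Q A J) (q : Q) (w : ℕ → A) (n : ℕ) : Eff Q J :=
  (M.stateAt q w n, fun j =>
    (∃ m, m < n ∧ M.stateAt q w m ∈ M.res j,
     ∃ m, m < n ∧ M.stateAt q w m ∈ M.req j ∧
        ∀ m', m ≤ m' → m' < n → M.stateAt q w m' ∉ M.res j,
     ∃ m, m < n ∧ M.Cst j (M.stateAt q w m) (w m) = true))

/-- One-letter update of effects. -/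
def effStep (M : StreettCost Q A J) (e : Eff Q J) (a : A) : Eff Q J :=
  (M.δ e.1 a, fun j =>
    ((e.2 j).1 ∨ e.1 ∈ M.res j,
     ((e.2 j).2.1 ∨ e.1 ∈ M.req j) ∧ e.1 ∉ M.res j,
     (e.2 j).2.2 ∨ M.Cst j e.1 a = true))

theorem eff_succ (M : StreettCost Q A J) (q : Q) (w : ℕ → A) (n : ℕ) :
    M.eff q w (n + 1) = M.effStep (M.eff q w n) (w n) := by
  unfold eff effStep
  refine Prod.ext rfl (funext fun j => Prod.ext ?_ (Prod.ext ?_ ?_))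
  · refine propext ⟨?_, ?_⟩
    · rintro ⟨m, hm, h⟩
      rcases Nat.lt_succ_iff_lt_or_eq.mp hm with h1 | rfl
      · exact Or.inl ⟨m, h1, h⟩
      · exact Or.inr h
    · rintro (⟨m, hm, h⟩ | h)
      · exact ⟨m, by omega, h⟩
      · exact ⟨n, by omega, h⟩
  · refine propext ⟨?_, ?_⟩
    · rintro ⟨m, hm, h, h'⟩
      refine ⟨?_, h' n (by omega) (by omega)⟩
      rcases Nat.lt_succ_iff_lt_or_eq.mp hm with h1 | rfl
      · exact Or.inl ⟨m, h1, h, fun m' e1 e2 => h' m' e1 (by omega)⟩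
      · exact Or.inr h
    · rintro ⟨⟨m, hm, h, h'⟩ | h, hn⟩
      · refine ⟨m, by omega, h, fun m' e1 e2 => ?_⟩
        rcases Nat.lt_succ_iff_lt_or_eq.mp e2 with h1 | rfl
        · exact h' m' e1 h1
        · exact hn
      · refine ⟨n, by omega, h, fun m' e1 e2 => ?_⟩
        obtain rfl : m' = n := by omega
        exact hn
  · refine propext ⟨?_, ?_⟩
    · rintro ⟨m, hm, h⟩
      rcases Nat.lt_succ_iff_lt_or_eq.mp hm with h1 | rfl
      · exact Or.inl ⟨m, h1, h⟩
      · exact Or.inr h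
    · rintro (⟨m, hm, h⟩ | h)
      · exact ⟨m, by omega, h⟩
      · exact ⟨n, by omega, h⟩

theorem eff_congr (M : StreettCost Q A J) (q : Q) (w w' : ℕ → A) (n : ℕ)
    (h : ∀ m, m < n → w m = w' m) : M.eff q w n = M.eff q w' n := by
  induction n with
  | zero =>
    unfold eff
    refine Prod.ext rfl (funext fun j => ?_)
    simp
  | succ n ih =>
    rw [eff_succ, eff_succ, ih fun m hm => h m (by omega), h n (by omega)]

theorem eff_zero (M : StreettCost Q A J) (q : Q) (w w' : ℕ → A) :
    M.eff q w 0 = M.eff q w' 0 := M.eff_congr q w w' 0 (by simp)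

theorem stateAt_add (M : StreettCost Q A J) (q : Q) (w : ℕ → A) (s m : ℕ) :
    M.stateAt q w (s + m) = M.stateAt (M.stateAt q w s) (fun t => w (s + t)) m := by
  induction m with
  | zero => rfl
  | succ m ih =>
    change M.δ (M.stateAt q w (s + m)) (w (s + m)) = M.δ _ _
    rw [ih]

/-- The class of the first `n` letters of an input word. -/
def cls (M : StreettCost Q (I × O) J) (x : ℕ → I) (n : ℕ) : Set (Q × Eff Q J) :=
  { z | ∃ y : ℕ → O, M.eff z.1 (fun t => (x t, y t)) n = z.2 }

theorem cls_succ (M : StreettCost Q (I × O) J) (x : ℕ → I) (n : ℕ) :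
    M.cls x (n + 1) = { z | ∃ e, (z.1, e) ∈ M.cls x n ∧ ∃ o, M.effStep e (x n, o) = z.2 } := by
  ext ⟨q, e⟩
  constructor
  · rintro ⟨y, hy⟩
    exact ⟨_, ⟨y, rfl⟩, y n, by rw [← hy, eff_succ]⟩
  · rintro ⟨e', ⟨y, hy⟩, o, ho⟩
    refine ⟨fun t => if t = n then o else y t, ?_⟩
    simp only at hy ho ⊢
    rw [eff_succ, ← ho, ← hy]
    congr 1
    · refine M.eff_congr _ _ _ _ fun m hm => ?_
      simp [hm.ne]
    · simp

theorem cls_pump_one [Fintype Q] [Fintype J] (M : StreettCost Q (I × O) J) (x : ℕ → I) (n : ℕ)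
    (hn : Fintype.card (Set (Q × Eff Q J)) ≤ n) :
    ∃ x' n', n < n' ∧ M.cls x' n' = M.cls x n := by
  obtain ⟨a, b, hab, heq⟩ :=
    Fintype.exists_ne_map_eq_of_card_lt (fun i : Fin (n + 1) => M.cls x i.1)
      (by rw [Fintype.card_fin]; omega)
  have key : ∀ a b : ℕ, a < b → b ≤ n → M.cls x a = M.cls x b →
      ∃ x' n', n < n' ∧ M.cls x' n' = M.cls x n := by
    intro a b hlt hbn heq
    let x' : ℕ → I := fun m => if m < b then x m else x (m - (b - a))
    have h0 : ∀ t, t ≤ b → M.cls x' t = M.cls x t := by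
      intro t
      induction t with
      | zero =>
        intro _
        ext ⟨q, e⟩
        constructor
        · rintro ⟨y, hy⟩; exact ⟨y, (M.eff_zero _ _ _).trans hy⟩
        · rintro ⟨y, hy⟩; exact ⟨y, (M.eff_zero _ _ _).trans hy⟩
      | succ t ih =>
        intro ht
        have hx : x' t = x t := if_pos (by omega)
        rw [cls_succ, cls_succ, ih (by omega), hx]
    have h1 : ∀ t, M.cls x' (b + t) = M.cls x (a + t) := by
      intro t
      induction t with
      | zero => exact (h0 b le_rfl).trans heq.symm
      | succ t ih =>
        have hx : x' (b + t) = x (a + t) := by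
          have : b + t - (b - a) = a + t := by omega
          simp only [x', this]
          rw [if_neg (by omega)]
        rw [← add_assoc, ← add_assoc, cls_succ, cls_succ, ih, hx]
    refine ⟨x', b + (n - a), by omega, ?_⟩
    rw [h1]
    congr 1
    omega
  have hne : a.1 ≠ b.1 := fun h => hab (Fin.ext h)
  rcases lt_or_gt_of_ne hne with h | h
  · exact key a.1 b.1 h (by omega) heq
  · exact key b.1 a.1 h (by omega) heq.symm

theorem cls_pump [Fintype Q] [Fintype J] (M : StreettCost Q (I × O) J) (x : ℕ → I) (n : ℕ)
    (hn : Fintype.card (Set (Q × Eff Q J)) ≤ n) (N : ℕ) :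
    ∃ z : (ℕ → I) × ℕ, N ≤ z.2 ∧ n ≤ z.2 ∧ M.cls x n = M.cls z.1 z.2 := by
  induction N with
  | zero => exact ⟨(x, n), Nat.zero_le _, le_rfl, rfl⟩
  | succ N ih =>
    obtain ⟨⟨x1, n1⟩, h1, h2, h3⟩ := ih
    obtain ⟨x2, n2, h4, h5⟩ := M.cls_pump_one x1 n1 (hn.trans h2)
    simp only at h1 h2 h3
    exact ⟨(x2, n2), by simp only; omega, by simp only; omega, h3.trans h5.symm⟩

theorem cls_match (M : StreettCost Q (I × O) J) (q : Q) (x x' : ℕ → I) (n n' : ℕ)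
    (y' : ℕ → O) : ∃ y : ℕ → O, M.cls x n = M.cls x' n' →
      M.eff q (fun t => (x t, y t)) n = M.eff q (fun t => (x' t, y' t)) n' := by
  by_cases h : M.cls x n = M.cls x' n'
  · have h1 : (q, M.eff q (fun t => (x' t, y' t)) n') ∈ M.cls x' n' := ⟨y', rfl⟩
    rw [← h] at h1
    obtain ⟨y, hy⟩ := h1
    exact ⟨y, fun _ => hy⟩
  · exact ⟨y', fun h' => absurd h' h⟩

theorem card_cls [Fintype Q] [Fintype J] (hQ : 0 < Fintype.card Q) :
    Fintype.card (Set (Q × Eff Q J)) ≤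
      2 ^ (Fintype.card Q ^ 4 * 2 ^ (3 * Fintype.card J)) := by
  rw [Fintype.card_set, Fintype.card_prod, Fintype.card_prod, Fintype.card_fun,
    Fintype.card_prod, Fintype.card_prod, show Fintype.card Prop = 2 from rfl]
  refine Nat.pow_le_pow_right (by norm_num) ?_
  rw [← mul_assoc, pow_mul 2 3]
  have : Fintype.card Q * Fintype.card Q ≤ Fintype.card Q ^ 4 := by
    rw [← pow_two]
    exact Nat.pow_le_pow_right hQ (by norm_num)
  exact Nat.mul_le_mul this (by norm_num)

end StreettCost

section Causal

variable {I O : Type}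

/-- Number of letters picked up to round `i`. -/
def totalF (f : ℕ → ℕ) (i : ℕ) : ℕ := ∑ j ∈ Finset.range (i + 1), f j

/-- Causality of a map from output words to input words. -/
def Causal (F : ℕ → ℕ) (α : (ℕ → O) → ℕ → I) : Prop :=
  ∀ i v v', (∀ j, j < i → v j = v' j) → ∀ m, m < F i → α v m = α v' m

theorem pre_succ (u : ℕ → List I) (n : ℕ) :
    ((List.range (n + 1)).map u).flatten = ((List.range n).map u).flatten ++ u n := by
  rw [List.range_succ]; simp

theorem pre_length (u : ℕ → List I) (n : ℕ) :
    (((List.range n).map u).flatten).length = ∑ j ∈ Finset.range n, (u j).length := by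
  induction n with
  | zero => simp
  | succ n ih => rw [pre_succ, List.length_append, ih, Finset.sum_range_succ]

theorem pre_mono [Inhabited I] (u : ℕ → List I) (n t m : ℕ)
    (h : m < (((List.range n).map u).flatten).length) :
    (((List.range (n + t)).map u).flatten).getD m default =
      (((List.range n).map u).flatten).getD m default := by
  induction t with
  | zero => rfl
  | succ t ih =>
    rw [← add_assoc, pre_succ, List.getD_append, ih]
    refine lt_of_lt_of_le h ?_
    rw [pre_length, pre_length]
    exact Finset.sum_le_sum_of_subset (Finset.range_mono (by omega))

theorem flatWord_eq [Inhabited I] (u : ℕ → List I) (hu : ∀ i, 0 < (u i).length) (n m : ℕ)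
    (h : m < (((List.range n).map u).flatten).length) :
    flatWord u m = (((List.range n).map u).flatten).getD m default := by
  unfold flatWord
  rcases le_total n (m + 1) with h1 | h1
  · obtain ⟨t, ht⟩ := Nat.exists_eq_add_of_le h1
    rw [ht]; exact pre_mono u n t m h
  · obtain ⟨t, ht⟩ := Nat.exists_eq_add_of_le h1
    rw [ht]
    refine (pre_mono u (m + 1) t m ?_).symm
    rw [pre_length]
    have : ∑ j ∈ Finset.range (m + 1), 1 ≤ ∑ j ∈ Finset.range (m + 1), (u j).length :=
      Finset.sum_le_sum fun i _ => hu i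
    simp only [Finset.sum_const, Finset.card_range, smul_eq_mul, mul_one] at this
    omega

theorem causal_of_IWins [Inhabited I] (f : ℕ → ℕ) (hf : DelayFn f) (L : Set (ℕ → I × O))
    (h : IWins f L) : ∃ α : (ℕ → O) → ℕ → I, Causal (totalF f) α ∧
      ∀ v, (fun n => (α v n, v n)) ∉ L := by
  obtain ⟨τ, hlen, hw⟩ := h
  refine ⟨fun v => flatWord (fun i => τ ((List.range i).map v)), ?_, fun v => ?_⟩
  · intro i v v' hv m hm
    have hl : ∀ (v : ℕ → O) i, (τ ((List.range i).map v)).length = f i := by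
      intro v i; rw [hlen]; simp
    have hpos : ∀ (v : ℕ → O) i, 0 < (τ ((List.range i).map v)).length := by
      intro v i; rw [hl]; exact hf i
    have hm' : ∀ v : ℕ → O, m < (((List.range (i + 1)).map
        (fun i => τ ((List.range i).map v))).flatten).length := by
      intro v
      rw [pre_length]
      simp only [hl]
      exact hm
    simp only
    rw [flatWord_eq _ (hpos v) (i + 1) m (hm' v), flatWord_eq _ (hpos v') (i + 1) m (hm' v')]
    congr 2
    refine List.map_congr_left fun a ha => ?_
    congr 1
    refine List.map_congr_left fun b hb => ?_
    rw [List.mem_range] at ha hb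
    exact hv b (by omega)
  · exact hw _ v fun i => rfl

theorem IWins_of_causal [Inhabited I] [Inhabited O] (f : ℕ → ℕ) (hf : DelayFn f)
    (L : Set (ℕ → I × O)) (α : (ℕ → O) → ℕ → I) (hα : Causal (totalF f) α)
    (hw : ∀ v, (fun n => (α v n, v n)) ∉ L) : IWins f L := by
  refine ⟨fun w => (List.range (f w.length)).map fun t =>
    α (fun n => w.getD n default) ((∑ j ∈ Finset.range w.length, f j) + t), ?_, ?_⟩
  · intro w; simp
  · intro u v hu
    have hu2 : ∀ i, u i = (List.range (f i)).map fun t =>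
        α v ((∑ j ∈ Finset.range i, f j) + t) := by
      intro i
      rw [hu i]
      simp only [List.length_map, List.length_range]
      refine List.map_congr_left fun t ht => ?_
      rw [List.mem_range] at ht
      refine hα i _ _ (fun j hj => ?_) _ ?_
      · simp [List.getD, hj]
      · unfold totalF
        rw [Finset.sum_range_succ]; omega
    have hpre : ∀ n, ((List.range n).map u).flatten =
        (List.range (∑ j ∈ Finset.range n, f j)).map (α v) := by
      intro n
      induction n with
      | zero => simp
      | succ n ih =>
        rw [pre_succ, ih, hu2 n, Finset.sum_range_succ, List.range_add, List.map_append,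
          List.map_map]
        rfl
    have hfl : ∀ m, flatWord u m = α v m := by
      intro m
      unfold flatWord
      rw [hpre]
      have : ∑ j ∈ Finset.range (m + 1), 1 ≤ ∑ j ∈ Finset.range (m + 1), f j :=
        Finset.sum_le_sum fun i _ => hf i
      simp only [Finset.sum_const, Finset.card_range, smul_eq_mul, mul_one] at this
      have h2 : m < ∑ j ∈ Finset.range (m + 1), f j := by omega
      simp [List.getD, h2]
    simp only [hfl]
    exact hw v

end Causal

section Simulation

variable {Q I O J : Type}

/-- Data of the simulation after a number of blocks. -/
structure Stg (Q I O : Type) where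
  dn : ℕ → I
  p : ℕ
  cur : ℕ → I
  l : ℕ
  x : ℕ → I
  Y : ℕ → O
  q : Q

/-- Truncated slice. -/
def slc [Inhabited O] (v : ℕ → O) (p l : ℕ) : ℕ → O :=
  fun t => if t < l then v (p + t) else default

/-- Initial simulation data. -/
def stg0 [Inhabited I] [Inhabited O] (M : StreettCost Q (I × O) J) (α : (ℕ → O) → ℕ → I)
    (F : ℕ → ℕ) (rep : (ℕ → I) → ℕ → (ℕ → I) × ℕ) : Stg Q I O where
  dn := fun _ => default
  p := 0
  cur := (rep (α fun _ => default) (F 0)).1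
  l := (rep (α fun _ => default) (F 0)).2
  x := α fun _ => default
  Y := fun _ => default
  q := M.qI

/-- One step of the simulation. -/
def stgNext [Inhabited O] (M : StreettCost Q (I × O) J) (α : (ℕ → O) → ℕ → I)
    (F : ℕ → ℕ) (d : ℕ) (rep : (ℕ → I) → ℕ → (ℕ → I) × ℕ)
    (mt : Q → (ℕ → I) → (ℕ → I) → ℕ → (ℕ → O) → ℕ → O) (v : ℕ → O) (r : ℕ)
    (S : Stg Q I O) : Stg Q I O where
  dn := fun m => if m < S.p then S.dn m else S.cur (m - S.p)
  p := S.p + S.l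
  cur := (rep (fun t => α S.Y ((r + 1) * d + t)) (F (S.p + S.l))).1
  l := (rep (fun t => α S.Y ((r + 1) * d + t)) (F (S.p + S.l))).2
  x := fun t => α S.Y ((r + 1) * d + t)
  Y := fun m => if m < r * d then S.Y m else
    mt S.q S.x S.cur S.l (slc v S.p S.l) (m - r * d)
  q := M.stateAt S.q (fun t => (S.cur t, slc v S.p S.l t)) S.l

/-- The simulation. -/
def stg [Inhabited I] [Inhabited O] (M : StreettCost Q (I × O) J) (α : (ℕ → O) → ℕ → I)
    (F : ℕ → ℕ) (d : ℕ) (rep : (ℕ → I) → ℕ → (ℕ → I) × ℕ)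
    (mt : Q → (ℕ → I) → (ℕ → I) → ℕ → (ℕ → O) → ℕ → O) (v : ℕ → O) : ℕ → Stg Q I O
  | 0 => stg0 M α F rep
  | r + 1 => stgNext M α F d rep mt v r (stg M α F d rep mt v r)

theorem stable_limit {X : Type} (g : ℕ → ℕ → X) (p : ℕ → ℕ) (hp : Monotone p)
    (h : ∀ r m, m < p r → g (r + 1) m = g r m) (r r' m : ℕ) (h1 : m < p r) (h2 : m < p r') :
    g r m = g r' m := by
  have key : ∀ r t, m < p r → g (r + t) m = g r m := by
    intro r t hr
    induction t with
    | zero => rfl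
    | succ t ih =>
      rw [← add_assoc, h _ _ (lt_of_lt_of_le hr (hp (by omega))), ih]
  rcases le_total r r' with hh | hh
  · obtain ⟨t, rfl⟩ := Nat.exists_eq_add_of_le hh
    exact (key r t h1).symm
  · obtain ⟨t, rfl⟩ := Nat.exists_eq_add_of_le hh
    exact key r' t h2

theorem simulation [Fintype J] [Inhabited I] [Inhabited O]
    (M : StreettCost Q (I × O) J) (d : ℕ) (hd : 0 < d)
    (hrep : ∀ (x : ℕ → I) (N : ℕ), ∃ z : (ℕ → I) × ℕ, N ≤ z.2 ∧ M.cls x d = M.cls z.1 z.2)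
    (α : (ℕ → O) → ℕ → I) (hα : Causal (fun i => 2 * d + i) α)
    (hw : ∀ v, (fun n => (α v n, v n)) ∉ M.Lang)
    (F : ℕ → ℕ) (hF : Monotone F) (hF1 : ∀ i, i < F i) :
    ∃ α' : (ℕ → O) → ℕ → I, Causal F α' ∧ ∀ v, (fun n => (α' v n, v n)) ∉ M.Lang := by
  choose rep hrep1 hrep2 using hrep
  have hmt := fun q x x' n' y' => M.cls_match q x x' d n' y'
  choose mt hmt using hmt
  let T : (ℕ → O) → ℕ → Stg Q I O := stg M α F d rep mt
  have hT : ∀ v r, T v (r + 1) = stgNext M α F d rep mt v r (T v r) := fun _ _ => rfl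
  have hl : ∀ v r, F (T v r).p ≤ (T v r).l := by
    intro v r
    cases r with
    | zero => exact hrep1 _ _
    | succ r => exact hrep1 _ _
  have hcls : ∀ v r, M.cls (T v r).x d = M.cls (T v r).cur (T v r).l := by
    intro v r
    cases r with
    | zero => exact hrep2 _ _
    | succ r => exact hrep2 _ _
  have hps : ∀ v r, (T v (r + 1)).p = (T v r).p + (T v r).l := fun _ _ => rfl
  have hp : ∀ v, StrictMono fun r => (T v r).p := by
    intro v
    refine strictMono_nat_of_lt_succ fun r => ?_
    have := hl v r
    have := hF1 (T v r).p
    rw [hps]; omega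
  have hdn : ∀ v r m, m < (T v r).p → (T v (r + 1)).dn m = (T v r).dn m :=
    fun v r m h => if_pos h
  have hY : ∀ v r m, m < r * d → (T v (r + 1)).Y m = (T v r).Y m :=
    fun v r m h => if_pos h
  let α' : (ℕ → O) → ℕ → I := fun v m => (T v (m + 1)).dn m
  have hα' : ∀ v r m, m < (T v r).p → α' v m = (T v r).dn m := by
    intro v r m h
    exact stable_limit (fun r m => (T v r).dn m) (fun r => (T v r).p) (hp v).monotone (hdn v)
      (m + 1) r m (lt_of_lt_of_le (Nat.lt_succ_self m) ((hp v).le_apply)) h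
  refine ⟨α', ?_, ?_⟩
  · -- causality
    have hTeq : ∀ (i : ℕ) (v v' : ℕ → O), (∀ j, j < i → v j = v' j) →
        ∀ r, (T v r).p ≤ i → T v r = T v' r := by
      intro i v v' hv r
      induction r with
      | zero => intro _; rfl
      | succ r ih =>
        intro hr
        rw [hps] at hr
        have e := ih (by omega)
        have hs : slc v (T v r).p (T v r).l = slc v' (T v r).p (T v r).l := by
          funext t
          unfold slc
          split_ifs with ht
          · exact hv _ (by omega)
          · rfl
        rw [hT, hT, ← e]
        unfold stgNext
        rw [hs]
    intro i v v' hv m hm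
    obtain ⟨r, hr1, hr2⟩ : ∃ r, (T v r).p ≤ i ∧ i < (T v (r + 1)).p := by
      have hex : ∃ l, i < (T v (l + 1)).p :=
        ⟨i, lt_of_lt_of_le (Nat.lt_succ_self i) ((hp v).le_apply)⟩
      refine ⟨Nat.find hex, ?_, Nat.find_spec hex⟩
      rcases hz : Nat.find hex with _ | z
      · exact Nat.zero_le _
      · have := Nat.find_min hex (m := z) (by omega)
        omega
    have e := hTeq i v v' hv r hr1
    have ep : (T v (r + 1)).p = (T v' (r + 1)).p := by rw [hT, hT, e]; rfl
    have ed : (T v (r + 1)).dn = (T v' (r + 1)).dn := by rw [hT, hT, e]; rfl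
    have ec : (T v (r + 1)).cur = (T v' (r + 1)).cur := by rw [hT, hT, e]; rfl
    have el : (T v (r + 1)).l = (T v' (r + 1)).l := by rw [hT, hT, e]; rfl
    have hm2 : m < (T v (r + 1 + 1)).p := by
      have h1 := hl v (r + 1)
      have h2 := hF hr2.le
      rw [hps]; omega
    have hm2' : m < (T v' (r + 1 + 1)).p := by
      rw [hps, ← ep, ← el, ← hps]; exact hm2
    rw [hα' v _ m hm2, hα' v' _ m hm2']
    change (if m < (T v (r + 1)).p then (T v (r + 1)).dn m else
      (T v (r + 1)).cur (m - (T v (r + 1)).p)) = (if m < (T v' (r + 1)).p then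
      (T v' (r + 1)).dn m else (T v' (r + 1)).cur (m - (T v' (r + 1)).p))
    rw [ep, ed, ec]
  · intro v hacc
    let y : ℕ → O := fun m => (T v (m + 1)).Y m
    have hmd : Monotone fun r : ℕ => r * d := fun a b h => Nat.mul_le_mul_right d h
    have hy : ∀ r m, m < r * d → y m = (T v r).Y m := by
      intro r m h
      refine stable_limit (fun r m => (T v r).Y m) (fun r => r * d) hmd (hY v) (m + 1) r m ?_ h
      exact lt_of_lt_of_le (Nat.lt_succ_self m) (Nat.le_mul_of_pos_right _ hd)
    have hcur : ∀ r t, t < (T v r).l → α' v ((T v r).p + t) = (T v r).cur t := by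
      intro r t ht
      rw [hα' v (r + 1) _ (by rw [hps]; omega)]
      change (if (T v r).p + t < (T v r).p then _ else (T v r).cur ((T v r).p + t - (T v r).p)) = _
      rw [if_neg (by omega), Nat.add_sub_cancel_left]
    have hyr : ∀ r t, t < d → y (r * d + t) =
        mt (T v r).q (T v r).x (T v r).cur (T v r).l (slc v (T v r).p (T v r).l) t := by
      intro r t ht
      rw [hy (r + 1) _ (by rw [add_mul, one_mul]; omega)]
      change (if r * d + t < r * d then _ else mt (T v r).q (T v r).x (T v r).cur (T v r).l
        (slc v (T v r).p (T v r).l) (r * d + t - r * d)) = _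
      rw [if_neg (by omega), Nat.add_sub_cancel_left]
    have hx : ∀ r t, t < d → α y (r * d + t) = (T v r).x t := by
      intro r t ht
      cases r with
      | zero =>
        change _ = α (fun _ => default) t
        rw [zero_mul, zero_add]
        exact hα 0 _ _ (by simp) t (by simp only; omega)
      | succ r =>
        change _ = α (T v r).Y ((r + 1) * d + t)
        refine hα (r * d) _ _ (fun j hj => hy r j hj) _ ?_
        simp only [add_mul, one_mul]; omega
    let w : ℕ → I × O := fun n => (α y n, y n)
    let w' : ℕ → I × O := fun n => (α' v n, v n)
    have heff : ∀ r, M.eff (T v r).q (fun t => w (r * d + t)) d =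
        M.eff (T v r).q (fun t => w' ((T v r).p + t)) (T v r).l := by
      intro r
      have h1 := hmt (T v r).q (T v r).x (T v r).cur (T v r).l
        (slc v (T v r).p (T v r).l) (hcls v r)
      refine Eq.trans (Eq.trans ?_ h1) ?_
      · refine M.eff_congr _ _ _ _ fun t ht => ?_
        exact Prod.ext (hx r t ht) (hyr r t ht)
      · refine M.eff_congr _ _ _ _ fun t ht => ?_
        refine Prod.ext (hcur r t ht).symm ?_
        exact if_pos ht
    have hq' : ∀ r, M.stateAt M.qI w' (T v r).p = (T v r).q := by
      intro r
      induction r with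
      | zero => rfl
      | succ r ih =>
        rw [hps, M.stateAt_add, ih]
        change _ = M.stateAt (T v r).q
          (fun t => ((T v r).cur t, slc v (T v r).p (T v r).l t)) (T v r).l
        have := M.eff_congr (T v r).q (fun t => w' ((T v r).p + t))
          (fun t => ((T v r).cur t, slc v (T v r).p (T v r).l t)) (T v r).l (fun t ht =>
            Prod.ext (hcur r t ht) (if_pos ht).symm)
        exact congrArg Prod.fst this
    have hq : ∀ r, M.stateAt M.qI w (r * d) = (T v r).q := by
      intro r
      induction r with
      | zero => rw [zero_mul]; rfl
      | succ r ih =>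
        rw [← hq', hps, M.stateAt_add, hq', add_mul, one_mul, M.stateAt_add, ih]
        exact congrArg Prod.fst (heff r)
    have hst : ∀ r m, M.stateAt M.qI w (r * d + m) =
        M.stateAt (T v r).q (fun t => w (r * d + t)) m := by
      intro r m; rw [M.stateAt_add, hq]
    have hst' : ∀ r m, M.stateAt M.qI w' ((T v r).p + m) =
        M.stateAt (T v r).q (fun t => w' ((T v r).p + t)) m := by
      intro r m; rw [M.stateAt_add, hq']
    have hbits : ∀ r j, (M.eff (T v r).q (fun t => w (r * d + t)) d).2 j =
        (M.eff (T v r).q (fun t => w' ((T v r).p + t)) (T v r).l).2 j := by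
      intro r j; rw [heff]
    refine hw y (M.accepting_transfer M.qI w w' (fun r => (T v r).p) (hp v) rfl d hd
      ?_ ?_ ?_ hacc)
    · rintro r j ⟨m, h1, h2, h3⟩
      obtain ⟨t, rfl⟩ := Nat.exists_eq_add_of_le h1
      rw [hst'] at h3
      simp only [hps] at h2
      have := (congrArg Prod.fst (hbits r j)).mpr ⟨t, by omega, h3⟩
      obtain ⟨s, hs, h4⟩ := this
      refine ⟨r * d + s, by omega, by rw [add_mul, one_mul]; omega, ?_⟩
      rw [hst]; exact h4
    · rintro r j ⟨m, h1, h2, h3, h4⟩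
      obtain ⟨t, rfl⟩ := Nat.exists_eq_add_of_le h1
      rw [hst] at h3
      rw [add_mul, one_mul] at h2 h4
      have := (congrArg (fun z => z.2.1) (hbits r j)).mp ⟨t, by omega, h3, fun m' e1 e2 => by
        have := h4 (r * d + m') (by omega) (by omega)
        rwa [hst] at this⟩
      obtain ⟨s, hs, h5, h6⟩ := this
      refine ⟨(T v r).p + s, Nat.le_add_right _ _, by simp only [hps]; omega, ?_, ?_⟩
      · rw [hst']; exact h5
      · intro m' e1 e2
        obtain ⟨t', rfl⟩ : ∃ t', m' = (T v r).p + t' := Nat.exists_eq_add_of_le (by omega)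
        simp only [hps] at e2
        rw [hst']
        exact h6 t' (by omega) (by omega)
    · rintro r j ⟨m, h1, h2, h3⟩
      obtain ⟨t, rfl⟩ := Nat.exists_eq_add_of_le h1
      rw [hst] at h3
      rw [add_mul, one_mul] at h2
      have := (congrArg (fun z => z.2.2) (hbits r j)).mp ⟨t, by omega, h3⟩
      obtain ⟨s, hs, h4⟩ := this
      refine ⟨(T v r).p + s, Nat.le_add_right _ _, by simp only [hps]; omega, ?_⟩
      rw [hst']; exact h4

end Simulation

end Helpers

/-- Theorem 5, constant lookahead for Streett conditions with costs.
For a Streett automaton with costs with `n` states and `k` Streett pairs, Player I wins the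
delay game with the constant delay function with `f 0 = 2^(n⁴·2^(3k)+1)` iff he wins it for
every delay function. -/
theorem statement10 {Q I O J : Type} [Fintype Q] [Fintype I] [Fintype O] [Fintype J]
    [Inhabited I]
    (M : StreettCost Q (I × O) J) (n k : ℕ)
    (hn : Fintype.card Q = n) (hk : Fintype.card J = k) :
    IWins (fun i => if i = 0 then 2 ^ (n ^ 4 * 2 ^ (3 * k) + 1) else 1) M.Lang ↔
      ∀ f : ℕ → ℕ, DelayFn f → IWins f M.Lang := by
  constructor
  · intro h f hf
    by_cases hO : Nonempty O
    · obtain ⟨o⟩ := hO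
      have : Inhabited O := ⟨o⟩
      have hQ : 0 < Fintype.card Q := Fintype.card_pos_iff.mpr ⟨M.qI⟩
      obtain ⟨d, hd⟩ : ∃ d, d = 2 ^ (n ^ 4 * 2 ^ (3 * k)) := ⟨_, rfl⟩
      have hdpos : 0 < d := by rw [hd]; positivity
      have hcard : Fintype.card (Set (Q × StreettCost.Eff Q J)) ≤ d := by
        rw [hd, ← hn, ← hk]
        exact StreettCost.card_cls hQ
      have hf0 : (fun i => if i = 0 then 2 ^ (n ^ 4 * 2 ^ (3 * k) + 1) else 1) =
          fun i : ℕ => if i = 0 then 2 * d else 1 := by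
        rw [pow_succ, ← hd, mul_comm]
      rw [hf0] at h
      obtain ⟨α, hα, hw⟩ := causal_of_IWins _ (by
        intro i
        simp only
        split_ifs <;> omega) _ h
      have hF : totalF (fun i : ℕ => if i = 0 then 2 * d else 1) = fun i => 2 * d + i := by
        funext i
        unfold totalF
        rw [Finset.sum_range_succ']
        simp [add_comm]
      rw [hF] at hα
      have hmono : Monotone (totalF f) := fun a b hab =>
        Finset.sum_le_sum_of_subset (Finset.range_mono (by omega))
      have hlt : ∀ i, i < totalF f i := by
        intro i
        have : ∑ j ∈ Finset.range (i + 1), 1 ≤ ∑ j ∈ Finset.range (i + 1), f j :=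
          Finset.sum_le_sum fun i _ => hf i
        simp only [Finset.sum_const, Finset.card_range, smul_eq_mul, mul_one] at this
        exact this
      obtain ⟨α', h1, h2⟩ := simulation M d hdpos (fun x N => by
        obtain ⟨z, h1, _, h3⟩ := M.cls_pump x d hcard N
        exact ⟨z, h1, h3⟩) α hα hw (totalF f) hmono hlt
      exact IWins_of_causal f hf _ α' h1 h2
    · refine ⟨fun w => List.replicate (f w.length) default, fun w => by simp, ?_⟩
      intro u v
      exact absurd ⟨v 0⟩ hO
  · intro h
    refine h _ fun i => ?_
    split_ifs
    · positivity
    · exact Nat.one_pos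
end
end

section
/- There is a constant c > 0 such that for every n > 1 there exists a finitary Büchi automaton A'_n over the alphabet Σ_I × Σ_O with Σ_I = Σ_O = {1, …, n, #} and with at most c·n states such that: (i) Player O wins Γ_f(L(A'_n)) for every delay function f; (ii) an optimal winning strategy for Player O in Γ_{f_{2^n}}(L(A'_n)) has cost 0; and (iii) for every k < 2^n, an optimal winning strategy for Player O in Γ_{f_k}(L(A'_n)) has cost n. -/
attribute [local instance] Classical.propDecidable

noncomputable section

/-- States of the automaton. -/
inductive St13 (n : ℕ) : Type
  | start : St13 n
  | wait (j : Fin (n + 1)) (b : Bool) : St13 n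
  | cyc (i : Fin (n + 1)) : St13 n
  | sink : St13 n

namespace St13

def code {n : ℕ} : St13 n → Fin (n + 1) × Fin 5
  | start => (0, 0)
  | wait j b => (j, if b then 1 else 2)
  | cyc i => (i, 3)
  | sink => (0, 4)

theorem code_inj {n : ℕ} : Function.Injective (code (n := n)) := by
  intro x y h
  rcases x with _ | ⟨j, b⟩ | i | _ <;> rcases y with _ | ⟨j', b'⟩ | i' | _ <;>
    simp [code] at h ⊢
  all_goals first
    | exact h
    | (cases b <;> cases b' <;> simp_all)
    | (cases b <;> simp_all)
    | (cases b' <;> simp_all)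

instance {n : ℕ} : Finite (St13 n) := Finite.of_injective _ code_inj

theorem card_le (n : ℕ) : Nat.card (St13 n) ≤ (n + 1) * 5 := by
  have := Nat.card_le_card_of_injective _ (code_inj (n := n))
  simpa using this

end St13

open St13

/-- The transition function; the letter `0` plays the role of `#`. -/
def step13 (n : ℕ) : St13 n → Fin (n + 1) × Fin (n + 1) → St13 n
  | start, a => if a.2 = 0 then cyc 0 else wait a.2 false
  | wait j s, a =>
      if a.1 = 0 then sink
      else if a.1 = j then (if s then sink else wait j true)
      else if j < a.1 then wait j false else wait j s
  | cyc i, _ => cyc (i + 1)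
  | sink, _ => sink

def col13 (n : ℕ) : St13 n → ℕ
  | start => 1
  | wait _ _ => 1
  | cyc i => if i = 0 then 2 else 1
  | sink => 2

def aut13 (n : ℕ) : PACost (St13 n) (Fin (n + 1) × Fin (n + 1)) where
  qI := start
  δ := step13 n
  Ω := col13 n
  Cst := fun _ _ => true

theorem aut13_finBuchi (n : ℕ) : (aut13 n).FinBuchi := by
  refine ⟨fun _ _ => rfl, fun q => ?_⟩
  rcases q with _ | ⟨j, b⟩ | i | _ <;> simp [aut13, col13]
  by_cases h : i = 0 <;> simp [h]

/-- Renaming of states. -/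
def rename13 {Q Q' A : Type} (M : PACost Q A) (e : Q ≃ Q') : PACost Q' A where
  qI := e M.qI
  δ := fun q a => e (M.δ (e.symm q) a)
  Ω := fun q => M.Ω (e.symm q)
  Cst := fun q a => M.Cst (e.symm q) a

theorem rename13_stateAt {Q Q' A : Type} (M : PACost Q A) (e : Q ≃ Q') (w : ℕ → A) (p : ℕ) :
    (rename13 M e).stateAt (rename13 M e).qI w p = e (M.stateAt M.qI w p) := by
  induction p with
  | zero => rfl
  | succ p ih =>
    simp only [PACost.stateAt]
    rw [ih]
    simp [rename13]

theorem rename13_cor {Q Q' A : Type} (M : PACost Q A) (e : Q ≃ Q') (w : ℕ → A) (p : ℕ) :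
    (rename13 M e).Cor (rename13 M e).qI w p = M.Cor M.qI w p := by
  have hΩ : ∀ q, (rename13 M e).Ω (e q) = M.Ω q := fun q => by simp [rename13]
  have hC : ∀ q a, (rename13 M e).Cst (e q) a = M.Cst q a := fun q a => by simp [rename13]
  have hA : ∀ c, (rename13 M e).Ans c = M.Ans c := by
    intro c
    ext x
    simp only [PACost.Ans, Set.mem_ofPred_eq]
    have : (∃ q, (rename13 M e).Ω q = x) ↔ ∃ q, M.Ω q = x := by
      constructor
      · rintro ⟨q, hq⟩
        exact ⟨e.symm q, hq⟩
      · rintro ⟨q, hq⟩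
        exact ⟨e q, by rw [hΩ, hq]⟩
    rw [this]
  simp only [PACost.Cor, PACost.segCost, rename13_stateAt, hΩ, hC, hA]

section Runs

variable {n : ℕ}


def st13 (w : ℕ → Fin (n + 1) × Fin (n + 1)) (p : ℕ) : St13 n := (aut13 n).stateAt (aut13 n).qI w p

theorem st13_zero (w : ℕ → Fin (n + 1) × Fin (n + 1)) : st13 w 0 = start := rfl

theorem st13_succ (w : ℕ → Fin (n + 1) × Fin (n + 1)) (p : ℕ) : st13 w (p + 1) = step13 n (st13 w p) (w p) := rfl

theorem cor13 (w : ℕ → Fin (n + 1) × Fin (n + 1)) (p : ℕ) :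
    (aut13 n).Cor (aut13 n).qI w p =
      if Even (col13 n (st13 w p)) then 0
      else sInf { c : ℕ∞ | ∃ p', p < p' ∧ col13 n (st13 w p') = 2 ∧ c = ((p' - p : ℕ) : ℕ∞) } := by
  unfold PACost.Cor
  have h2 : ∀ q, (aut13 n).Ω q = col13 n q := fun _ => rfl
  simp only [h2]
  by_cases h : Even (col13 n (st13 w p))
  · rw [if_pos h]
    exact if_pos h
  · rw [if_neg h]
    refine (if_neg h).trans ?_
    have h1 : col13 n (st13 w p) = 1 := by
      rcases (aut13_finBuchi n).2 (st13 w p) with h' | h'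
      · exact h'
      · have h'' : col13 n (st13 w p) = 2 := h'
        rw [h''] at h
        exact absurd even_two h
    congr 1
    ext c
    simp only [Set.mem_ofPred_eq]
    refine exists_congr fun p' => and_congr Iff.rfl (and_congr ?_ ?_)
    · change col13 n (st13 w p') ∈ (aut13 n).Ans (col13 n (st13 w p)) ↔ _
      rw [h1]
      simp only [PACost.Ans, Set.mem_ofPred_eq, h2]
      constructor
      · rintro ⟨_, h3, _⟩
        rcases (aut13_finBuchi n).2 (st13 w p') with h' | h'
        · rw [h2] at h'
          omega
        · exact h'
      · intro h3
        rw [h3]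
        exact ⟨⟨sink, rfl⟩, by norm_num, even_two⟩
    · have : (aut13 n).segCost (aut13 n).qI w p p' = p' - p := by
        simp [PACost.segCost, aut13]
      rw [this]

theorem st13_one_wait (w : ℕ → Fin (n + 1) × Fin (n + 1)) (h : (w 0).2 ≠ 0) :
    st13 w 1 = wait (w 0).2 false := by
  rw [st13_succ, st13_zero]
  simp [step13, h]

theorem sink_mono (w : ℕ → Fin (n + 1) × Fin (n + 1)) (p : ℕ) (h : st13 w p = sink) :
    ∀ q, p ≤ q → st13 w q = sink := by
  intro q hq
  induction q, hq using Nat.le_induction with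
  | base => exact h
  | succ q _ ih => rw [st13_succ, ih]; rfl

theorem wCost_sink (w : ℕ → Fin (n + 1) × Fin (n + 1)) (p : ℕ) (h : st13 w p = sink) :
    (aut13 n).wCost w = 0 := by
  unfold PACost.wCost
  have : (fun m => (aut13 n).Cor (aut13 n).qI w m) =ᶠ[Filter.atTop] fun _ => 0 := by
    filter_upwards [Filter.eventually_ge_atTop p] with q hq
    rw [cor13, sink_mono w p h q hq]
    simp [col13]
  rw [Filter.limsup_congr this]
  simp

theorem wCost_wait (w : ℕ → Fin (n + 1) × Fin (n + 1)) (h : ∀ p, ∃ j b, st13 w (p + 1) = wait j b) :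
    (aut13 n).wCost w = ⊤ := by
  unfold PACost.wCost
  have : (fun m => (aut13 n).Cor (aut13 n).qI w m) =ᶠ[Filter.atTop] fun _ => ⊤ := by
    filter_upwards [Filter.eventually_ge_atTop 1] with q hq
    have hcol : ∀ p, 1 ≤ p → col13 n (st13 w p) = 1 := by
      intro p hp
      obtain ⟨p, rfl⟩ := Nat.exists_eq_add_of_le' hp
      obtain ⟨j, b, hb⟩ := h p
      rw [hb]; rfl
    rw [cor13, hcol q hq, if_neg (by decide)]
    rw [sInf_eq_top]
    rintro c ⟨p', h1, h2, _⟩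
    rw [hcol p' (by omega)] at h2
    omega
  rw [Filter.limsup_congr this]
  simp

theorem st13_cyc (w : ℕ → Fin (n + 1) × Fin (n + 1)) (h : (w 0).2 = 0) (p : ℕ) :
    st13 w (p + 1) = cyc (Fin.ofNat (n + 1) p) := by
  induction p with
  | zero =>
    rw [st13_succ, st13_zero]
    simp [step13, h]
  | succ p ih =>
    rw [st13_succ, ih]
    simp only [step13]
    congr 1
    apply Fin.ext
    simp [Fin.val_add, Fin.ofNat]

theorem col13_cyc (w : ℕ → Fin (n + 1) × Fin (n + 1)) (h : (w 0).2 = 0) (p : ℕ) :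
    col13 n (st13 w (p + 1)) = if p % (n + 1) = 0 then 2 else 1 := by
  rw [st13_cyc w h]
  simp [col13, Fin.ext_iff]

theorem wCost_cyc (hn : 1 < n) (w : ℕ → Fin (n + 1) × Fin (n + 1)) (h : (w 0).2 = 0) :
    (aut13 n).wCost w = n := by
  unfold PACost.wCost
  apply le_antisymm
  · apply Filter.limsup_le_of_le
    · isBoundedDefault
    filter_upwards [Filter.eventually_ge_atTop 1] with q hq
    obtain ⟨p, rfl⟩ := Nat.exists_eq_add_of_le' hq
    rw [cor13, col13_cyc w h]
    by_cases hp : p % (n + 1) = 0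
    · simp [hp]
    · rw [if_neg hp, if_neg (by decide)]
      have hlt := Nat.mod_lt p (Nat.succ_pos n)
      have hdm := Nat.div_add_mod p (n + 1)
      have hmul : (n + 1) * (p / (n + 1) + 1) = (n + 1) * (p / (n + 1)) + (n + 1) := by ring
      have hlt1 : p + 1 < (n + 1) * (p / (n + 1) + 1) + 1 := by
        rw [hmul]; simp only [Nat.succ_eq_add_one] at *; omega
      have hcol : col13 n (st13 w ((n + 1) * (p / (n + 1) + 1) + 1)) = 2 := by
        rw [col13_cyc w h]; simp
      refine le_trans (b := (((n + 1) * (p / (n + 1) + 1) + 1 - (p + 1) : ℕ) : ℕ∞))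
        (sInf_le ?_) ?_
      · exact ⟨_, hlt1, hcol, rfl⟩
      · have : (n + 1) * (p / (n + 1) + 1) + 1 - (p + 1) ≤ n := by
          rw [hmul]; simp only [Nat.succ_eq_add_one] at *; omega
        exact_mod_cast this
  · apply Filter.le_limsup_of_frequently_le
    · rw [Filter.frequently_atTop]
      intro N
      refine ⟨(n + 1) * N + 1 + 1, ?_, ?_⟩
      · nlinarith
      · rw [cor13, col13_cyc w h]
        have h1 : ((n + 1) * N + 1) % (n + 1) = 1 := by
          rw [Nat.mul_add_mod]; exact Nat.mod_eq_of_lt (by omega)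
        rw [h1, if_neg one_ne_zero, if_neg (by decide)]
        apply le_sInf
        rintro c ⟨p', h2, h3, rfl⟩
        norm_cast
        obtain ⟨p, rfl⟩ : ∃ p, p' = p + 1 := ⟨p' - 1, by omega⟩
        rw [col13_cyc w h] at h3
        have h4 : p % (n + 1) = 0 := by
          by_contra h5
          rw [if_neg h5] at h3
          omega
        obtain ⟨c, rfl⟩ := Nat.dvd_of_mod_eq_zero h4
        have : N < c := by
          by_contra hc
          have := Nat.mul_le_mul_left (n + 1) (not_lt.mp hc)
          omega
        have := Nat.mul_le_mul_left (n + 1) this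
        rw [Nat.succ_eq_add_one, Nat.mul_add] at this
        omega
    · isBoundedDefault

theorem wait_or_sink (w : ℕ → Fin (n + 1) × Fin (n + 1)) (h : (w 0).2 ≠ 0) (p : ℕ) :
    (∃ b, st13 w (p + 1) = wait (w 0).2 b) ∨ st13 w (p + 1) = sink := by
  induction p with
  | zero => exact Or.inl ⟨_, st13_one_wait w h⟩
  | succ p ih =>
    rw [st13_succ]
    rcases ih with ⟨b, hb⟩ | hb
    · rw [hb]
      simp only [step13]
      split_ifs <;> simp
    · rw [hb]; right; rfl

/-- `j` is a good choice for the input word `α` when only looking at letters before `K`. -/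
def Good13 (α : ℕ → Fin (n + 1)) (j : Fin (n + 1)) (K : ℕ) : Prop :=
  j ≠ 0 ∧ ((∃ p, 1 ≤ p ∧ p < K ∧ α p = 0) ∨
    ∃ p q, 1 ≤ p ∧ p < q ∧ q < K ∧ α p = j ∧ α q = j ∧ ∀ r, p < r → r < q → α r ≤ j)

theorem Good13.congr {α β : ℕ → Fin (n + 1)} {j : Fin (n + 1)} {K : ℕ} (h : Good13 α j K)
    (hab : ∀ p, p < K → α p = β p) : Good13 β j K := by
  refine ⟨h.1, ?_⟩
  rcases h.2 with ⟨p, h1, h2, h3⟩ | ⟨p, q, h1, h2, h3, h4, h5, h6⟩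
  · exact Or.inl ⟨p, h1, h2, by rw [← hab p h2, h3]⟩
  · refine Or.inr ⟨p, q, h1, h2, h3, ?_, ?_, ?_⟩
    · rw [← hab p (by omega), h4]
    · rw [← hab q h3, h5]
    · intro r hr1 hr2
      rw [← hab r (by omega)]
      exact h6 r hr1 hr2

theorem good_cost (w : ℕ → Fin (n + 1) × Fin (n + 1)) (K : ℕ)
    (h : Good13 (fun p => (w p).1) (w 0).2 K) : (aut13 n).wCost w = 0 := by
  obtain ⟨h0, ⟨p, h1, _, h3⟩ | ⟨p, q, h1, h2, _, h4, h5, h6⟩⟩ := h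
  · apply wCost_sink w (p + 1)
    obtain ⟨p, rfl⟩ := Nat.exists_eq_add_of_le' h1
    rw [st13_succ]
    rcases wait_or_sink w h0 p with ⟨b, hb⟩ | hb
    · rw [hb]
      simp only at h3
      simp [step13, h3]
    · rw [hb]; rfl
  · simp only at h4 h5 h6
    have key : ∀ r, p + 1 ≤ r → r ≤ q →
        st13 w r = wait (w 0).2 true ∨ st13 w r = sink := by
      intro r hr
      induction r, hr using Nat.le_induction with
      | base =>
        intro _
        obtain ⟨p, rfl⟩ := Nat.exists_eq_add_of_le' h1
        rw [st13_succ]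
        rcases wait_or_sink w h0 p with ⟨b, hb⟩ | hb
        · rw [hb]
          cases b <;> simp [step13, h4, h0]
        · rw [hb]; right; rfl
      | succ r hr ih =>
        intro hrq
        rw [st13_succ]
        rcases ih (by omega) with hb | hb
        · rw [hb]
          have h7 := h6 r (by omega) (by omega)
          simp only [step13]
          split_ifs with h8 h9 h10 <;> simp
          exact absurd h10 (not_lt.mpr h7)
        · rw [hb]; right; rfl
    apply wCost_sink w (q + 1)
    rw [st13_succ]
    rcases key q (by omega) le_rfl with hb | hb
    · rw [hb]
      simp [step13, h5]
    · rw [hb]; rfl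

theorem not_good_cost (w : ℕ → Fin (n + 1) × Fin (n + 1)) (h0 : (w 0).2 ≠ 0)
    (h : ∀ K, ¬ Good13 (fun p => (w p).1) (w 0).2 K) : (aut13 n).wCost w = ⊤ := by
  apply wCost_wait
  have key : ∀ p, ∃ b, st13 w (p + 1) = wait (w 0).2 b ∧
      (b = true → ∃ p', 1 ≤ p' ∧ p' < p + 1 ∧ (w p').1 = (w 0).2 ∧
        ∀ r, p' < r → r < p + 1 → (w r).1 ≤ (w 0).2) := by
    intro p
    induction p with
    | zero => exact ⟨false, st13_one_wait w h0, by simp⟩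
    | succ p ih =>
      obtain ⟨b, hb, hb'⟩ := ih
      rw [st13_succ, hb]
      have hz : (w (p + 1)).1 ≠ 0 := fun hz =>
        h (p + 2) ⟨h0, Or.inl ⟨p + 1, by omega, by omega, hz⟩⟩
      simp only [step13, if_neg hz]
      by_cases hj : (w (p + 1)).1 = (w 0).2
      · rw [if_pos hj]
        cases b with
        | true =>
          obtain ⟨p', a1, a2, a3, a4⟩ := hb' rfl
          exact absurd ⟨h0, Or.inr ⟨p', p + 1, a1, a2, by omega, a3, hj, a4⟩⟩ (h (p + 2))
        | false =>
          refine ⟨true, by simp, fun _ => ⟨p + 1, by omega, by omega, hj, ?_⟩⟩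
          intro r _ _
          omega
      · rw [if_neg hj]
        by_cases hl : (w 0).2 < (w (p + 1)).1
        · exact ⟨false, by simp [hl], by simp⟩
        · refine ⟨b, by simp [hl], fun hbt => ?_⟩
          obtain ⟨p', a1, a2, a3, a4⟩ := hb' hbt
          refine ⟨p', a1, by omega, a3, fun r hr1 hr2 => ?_⟩
          by_cases hr : r = p + 1
          · subst hr; exact not_lt.mp hl
          · exact a4 r hr1 (by omega)
  intro p
  obtain ⟨b, hb, _⟩ := key p
  exact ⟨_, b, hb⟩

end Runs

/-- Every word of length `2 ^ n` over `{1, …, n}` contains a bad pair. -/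
theorem exists_bad_pair (α : ℕ → ℕ) (n : ℕ) : ∀ s : ℕ,
    (∀ p, s ≤ p → p < s + 2 ^ n → 1 ≤ α p ∧ α p ≤ n) →
    ∃ p q, s ≤ p ∧ p < q ∧ q < s + 2 ^ n ∧ α p = α q ∧ ∀ r, p < r → r < q → α r ≤ α p := by
  induction n with
  | zero =>
    intro s h
    have := h s le_rfl (by simp)
    omega
  | succ n ih =>
    intro s h
    have hpow : 2 ^ (n + 1) = 2 ^ n + 2 ^ n := by ring
    rw [hpow] at h ⊢
    by_cases h1 : ∃ p, s ≤ p ∧ p < s + 2 ^ n ∧ α p = n + 1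
    · by_cases h2 : ∃ q, s + 2 ^ n ≤ q ∧ q < s + (2 ^ n + 2 ^ n) ∧ α q = n + 1
      · obtain ⟨p, a1, a2, a3⟩ := h1
        obtain ⟨q, b1, b2, b3⟩ := h2
        refine ⟨p, q, a1, by omega, b2, by omega, fun r hr1 hr2 => ?_⟩
        have := h r (by omega) (by omega)
        omega
      · push Not at h2
        obtain ⟨p, q, a1, a2, a3, a4⟩ := ih (s + 2 ^ n) (by
          intro p hp1 hp2
          have := h p (by omega) (by omega)
          have := h2 p hp1 (by omega)
          omega)
        exact ⟨p, q, by omega, a2, by omega, a4⟩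
    · push Not at h1
      obtain ⟨p, q, a1, a2, a3, a4⟩ := ih s (by
        intro p hp1 hp2
        have := h p (by omega) (by omega)
        have := h1 p hp1 hp2
        omega)
      exact ⟨p, q, a1, a2, by omega, a4⟩

theorem exists_good {n : ℕ} (hn : 1 < n) (α : ℕ → Fin (n + 1)) :
    ∃ j, Good13 α j (2 ^ n + 1) := by
  by_cases h : ∃ p, 1 ≤ p ∧ p < 2 ^ n + 1 ∧ α p = 0
  · exact ⟨Fin.last n, by simp [Fin.ext_iff]; omega, Or.inl h⟩
  · push Not at h
    have hpos : ∀ p, 1 ≤ p → p < 1 + 2 ^ n → 1 ≤ (α p).val ∧ (α p).val ≤ n := by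
      intro p h1 h2
      have h3 := h p h1 (by omega)
      have h4 : (α p).val ≠ 0 := fun h5 => h3 (Fin.ext h5)
      have := (α p).isLt
      omega
    obtain ⟨p, q, a1, a2, a3, a4, a5⟩ := exists_bad_pair (fun p => (α p).val) n 1 hpos
    refine ⟨α p, h p a1 (by omega), Or.inr ⟨p, q, a1, a2, by omega, rfl, ?_, ?_⟩⟩
    · exact (Fin.ext a4).symm
    · intro r hr1 hr2
      exact a5 r hr1 hr2

/-- Between two positions of equal 2-adic valuation there is one of larger valuation. -/
theorem ruler (p q : ℕ) (hp : 0 < p) (hpq : p < q) (h : padicValNat 2 p = padicValNat 2 q) :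
    ∃ r, p < r ∧ r < q ∧ padicValNat 2 p < padicValNat 2 r := by
  set v := padicValNat 2 p with hv
  obtain ⟨a, ha⟩ : 2 ^ v ∣ p := pow_padicValNat_dvd
  obtain ⟨b, hb⟩ : 2 ^ v ∣ q := h ▸ pow_padicValNat_dvd
  have hna : ¬ 2 ^ (v + 1) ∣ p := pow_succ_padicValNat_not_dvd hp.ne'
  have hnb : ¬ 2 ^ (v + 1) ∣ q := h ▸ pow_succ_padicValNat_not_dvd (by omega)
  have hoa : a % 2 = 1 := by
    by_contra hc
    obtain ⟨c, hc⟩ : 2 ∣ a := by omega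
    exact hna ⟨c, by rw [ha, hc, pow_succ]; ring⟩
  have hob : b % 2 = 1 := by
    by_contra hc
    obtain ⟨c, hc⟩ : 2 ∣ b := by omega
    exact hnb ⟨c, by rw [hb, hc, pow_succ]; ring⟩
  have hpos : 0 < 2 ^ v := by positivity
  have hab : a < b := by
    by_contra hc
    have := Nat.mul_le_mul_left (2 ^ v) (not_lt.mp hc)
    omega
  refine ⟨2 ^ v * (a + 1), ?_, ?_, ?_⟩
  · rw [ha]; exact Nat.mul_lt_mul_of_pos_left (by omega) hpos
  · rw [hb]; exact Nat.mul_lt_mul_of_pos_left (by omega) hpos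
  · have hd : 2 ^ (v + 1) ∣ 2 ^ v * (a + 1) := by
      obtain ⟨c, hc⟩ : 2 ∣ a + 1 := by omega
      exact ⟨c, by rw [hc, pow_succ]; ring⟩
    have := (padicValNat_dvd_iff_le (p := 2) (a := 2 ^ v * (a + 1)) (n := v + 1)
      (by positivity)).mp hd
    omega

theorem flatWord_lt {I : Type} [Inhabited I] (u : ℕ → List I) (p : ℕ) (d : I)
    (hp : p < (u 0).length) : flatWord u p = (u 0).getD p d := by
  unfold flatWord
  rw [List.range_succ_eq_map, List.map_cons, List.flatten_cons, List.getD_append _ _ _ _ hp]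
  rw [List.getD_eq_getElem _ _ hp, List.getD_eq_getElem _ _ hp]

theorem flatWord_ge {I : Type} [Inhabited I] (u : ℕ → List I) (p : ℕ) (a : I)
    (hu : ∀ i, u (i + 1) = [a]) (h0 : 0 < (u 0).length) (hp : (u 0).length ≤ p) :
    flatWord u p = a := by
  unfold flatWord
  rw [List.range_succ_eq_map, List.map_cons, List.flatten_cons, List.getD_append_right _ _ _ _ hp]
  have : ((List.map u (List.map Nat.succ (List.range p))).flatten) = List.replicate p a := by
    rw [List.map_map]
    have : (u ∘ Nat.succ) = fun _ => [a] := funext hu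
    rw [this]
    simp
  rw [this, List.getD_eq_getElem _ _ (by simp; omega)]
  simp

theorem oHist_zero {I : Type} (u : ℕ → List I) : oHist u 0 = u 0 := by
  simp [oHist]

/-- The beginning of Player I's word. -/
def rulerList (n k : ℕ) : List (Fin (n + 1)) :=
  (List.range (k + 1)).map fun p => Fin.ofNat (n + 1) (padicValNat 2 p + 1)

theorem lower13 {n : ℕ} (hn : 1 < n) (k : ℕ) (hk : k < 2 ^ n)
    (τO : List (Fin (n + 1)) → Fin (n + 1))
    (hτ : OWinning (constDF k) (aut13 n).Lang τO) :
    (n : ℕ∞) ≤ stratCost (aut13 n).wCost (constDF k) τO := by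
  set j := τO (rulerList n k) with hj
  obtain ⟨a, ha0, haj⟩ : ∃ a : Fin (n + 1), a ≠ 0 ∧ a ≠ j := by
    by_cases h : j = ⟨1, by omega⟩
    · exact ⟨⟨2, by omega⟩, by simp [Fin.ext_iff], by rw [h]; simp⟩
    · exact ⟨⟨1, by omega⟩, by simp [Fin.ext_iff], fun h' => h h'.symm⟩
  let u : ℕ → List (Fin (n + 1)) := fun i => if i = 0 then rulerList n k else [a]
  have hu0 : u 0 = rulerList n k := rfl
  have hus : ∀ i, u (i + 1) = [a] := fun i => by simp [u]
  have hlen : (rulerList n k).length = k + 1 := by simp [rulerList]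
  let v : ℕ → Fin (n + 1) := fun i => τO (oHist u i)
  have hv0 : v 0 = j := by
    simp only [v, oHist_zero, hu0, hj]
  have hul : ∀ i, (u i).length = constDF k i := by
    intro i
    rcases i with _ | i
    · rw [hu0, hlen]; simp [constDF]
    · rw [hus]; simp [constDF]
  have hcost : (aut13 n).wCost (fun m => (flatWord u m, v m)) ≤
      stratCost (aut13 n).wCost (constDF k) τO := by
    unfold stratCost
    exact le_iSup_of_le u (le_iSup_of_le v (le_iSup_of_le ⟨hul, fun _ => rfl⟩ le_rfl))
  have hlt : ∀ p, 1 ≤ p → p ≤ k → (flatWord u p).val = padicValNat 2 p + 1 := by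
    intro p h1 hp
    rw [flatWord_lt u p 0 (by rw [hu0, hlen]; omega), hu0,
      List.getD_eq_getElem _ _ (by rw [hlen]; omega)]
    simp only [rulerList, List.getElem_map, List.getElem_range, Fin.ofNat]
    apply Nat.mod_eq_of_lt
    have hd : 2 ^ padicValNat 2 p ≤ p := Nat.le_of_dvd (by omega) pow_padicValNat_dvd
    have : padicValNat 2 p < n := (Nat.pow_lt_pow_iff_right (by norm_num)).mp
      (lt_of_le_of_lt hd (lt_of_le_of_lt hp hk))
    omega
  have hge : ∀ p, k < p → flatWord u p = a := by
    intro p hp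
    exact flatWord_ge u p a hus (by rw [hu0, hlen]; omega) (by rw [hu0, hlen]; omega)
  by_cases hj0 : j = 0
  · rw [← wCost_cyc hn (fun m => (flatWord u m, v m)) (by rw [hv0, hj0])]
    exact hcost
  · exfalso
    have hwin := hτ u v hul (fun _ => rfl)
    have htop := not_good_cost (fun m => (flatWord u m, v m)) (by rw [hv0]; exact hj0) (by
      intro K hG
      simp only [hv0] at hG
      obtain ⟨_, ⟨p, h1, _, h3⟩ | ⟨p, q, h1, h2, _, h4, h5, h6⟩⟩ := hG
      · replace h3 : flatWord u p = 0 := h3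
        by_cases hp : p ≤ k
        · have := hlt p h1 hp
          rw [h3] at this
          simp at this
        · rw [hge p (by omega)] at h3
          exact ha0 h3
      · replace h4 : flatWord u p = j := h4
        replace h5 : flatWord u q = j := h5
        replace h6 : ∀ r, p < r → r < q → flatWord u r ≤ j := h6
        by_cases hq : q ≤ k
        · have e1 := hlt p h1 (by omega)
          have e2 := hlt q (by omega) hq
          rw [h4] at e1
          rw [h5] at e2
          obtain ⟨r, r1, r2, r3⟩ := ruler p q (by omega) h2 (by omega)
          have e3 := hlt r (by omega) (by omega)
          have := Fin.le_def.mp (h6 r r1 r2)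
          omega
        · rw [hge q (by omega)] at h5
          exact haj h5)
    have : (aut13 n).wCost (fun m => (flatWord u m, v m)) < ⊤ := hwin
    rw [htop] at this
    exact lt_irrefl _ this

theorem owinning13 {n : ℕ} (hn : 1 < n) (f : ℕ → ℕ) :
    OWinning f (aut13 n).Lang (fun _ => 0) := by
  intro u v _ hv
  change (aut13 n).wCost _ < ⊤
  rw [wCost_cyc hn _ (hv 0)]
  exact ENat.natCast_lt_top n

theorem optimal_low13 {n : ℕ} (hn : 1 < n) (k : ℕ) (hk : k < 2 ^ n) :
    OptimalCostIs (aut13 n).Lang (aut13 n).wCost (constDF k) (n : ℕ∞) := by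
  refine ⟨⟨fun _ => 0, owinning13 hn _, le_antisymm ?_ (lower13 hn k hk _ (owinning13 hn _))⟩,
    fun τ hτ => lower13 hn k hk τ hτ⟩
  unfold stratCost
  refine iSup_le fun u => iSup_le fun v => iSup_le fun h => ?_
  rw [wCost_cyc hn _ (h.2 0)]

theorem optimal_high13 {n : ℕ} (hn : 1 < n) :
    OptimalCostIs (aut13 n).Lang (aut13 n).wCost (constDF (2 ^ n)) 0 := by
  choose g hg using fun h : List (Fin (n + 1)) => exists_good hn (fun p => h.getD p 0)
  have key : ∀ u : ℕ → List (Fin (n + 1)), ∀ v : ℕ → Fin (n + 1),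
      (∀ i, (u i).length = constDF (2 ^ n) i) → (∀ i, v i = g (oHist u i)) →
      (aut13 n).wCost (fun m => (flatWord u m, v m)) = 0 := by
    intro u v hu hv
    apply good_cost _ (2 ^ n + 1)
    simp only [hv 0, oHist_zero]
    refine (hg (u 0)).congr fun p hp => ?_
    rw [flatWord_lt u p 0]
    rw [hu 0]
    simpa [constDF] using hp
  refine ⟨⟨g, ?_, ?_⟩, fun _ _ => zero_le⟩
  · intro u v hu hv
    change (aut13 n).wCost _ < ⊤
    rw [key u v hu hv]
    exact ENat.natCast_lt_top 0
  · rw [← nonpos_iff_eq_zero]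
    unfold stratCost
    exact iSup_le fun u => iSup_le fun v => iSup_le fun h => (key u v h.1 h.2).le

/-- Theorem 7, exponential lookahead for optimal cost. There is a
linear-size family of finitary Büchi automata `A'_n` over `{1, …, n, #}²` (modeled as
`Fin (n+1)`) such that Player O wins for every delay function, an optimal winning strategy
with lookahead `2^n` has cost `0`, and for every lookahead `k < 2^n` an optimal winning
strategy has cost `n`. -/
theorem statement13 :
    ∃ c : ℕ, 0 < c ∧ ∀ n : ℕ, 1 < n →
      ∃ m : ℕ, ∃ M : PACost (Fin m) (Fin (n + 1) × Fin (n + 1)),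
        m ≤ c * n ∧ M.FinBuchi ∧
        (∀ f : ℕ → ℕ, DelayFn f → OWins f M.Lang) ∧
        OptimalCostIs M.Lang M.wCost (constDF (2 ^ n)) 0 ∧
        (∀ k : ℕ, k < 2 ^ n → OptimalCostIs M.Lang M.wCost (constDF k) (n : ℕ∞)) := by
  refine ⟨10, by norm_num, fun n hn => ?_⟩
  let e := Finite.equivFin (St13 n)
  have hw : (rename13 (aut13 n) e).wCost = (aut13 n).wCost := by
    funext w
    unfold PACost.wCost
    simp only [rename13_cor]
  have hL : (rename13 (aut13 n) e).Lang = (aut13 n).Lang := by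
    ext w
    simp only [PACost.Lang, PACost.Accepting, Set.mem_ofPred_eq, rename13_cor]
  refine ⟨Nat.card (St13 n), rename13 (aut13 n) e, ?_, ?_, ?_, ?_, ?_⟩
  · have := card_le n
    omega
  · exact ⟨fun q a => rfl, fun q => (aut13_finBuchi n).2 (e.symm q)⟩
  · intro f _
    rw [hL]
    exact ⟨_, owinning13 hn f⟩
  · rw [hw, hL]
    exact optimal_high13 hn
  · intro k hk
    rw [hw, hL]
    exact optimal_low13 hn k hk
end
end
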